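/- arXiv:1905.08470 — 5 statements merged into one kernel-verified Lean document; each statement's English description precedes it below -/
import Mathlib

section
/- In the semi-primitive cyclotomic setting, assume |T_0| = |T_1| = (q−1)/2 and define E_0 = {(x,xy) : x ∈ D_0, y ∈ A_0} ∪ {(x,xy) : x ∈ D_1, y ∈ A_1} ∪ {(0,x) : x ∈ D_ε}. Then E_0 is a set of type Q in F_{q²} × F_{q²}. -/
noncomputable section

def zetaP (p : ℕ) : ℂ := Complex.exp (2 * Real.pi * Complex.I / p)

/-- The canonical additive character `ψ(x) = ζ_p^{Tr_{L/F_p}(x)}`. -/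
def psiL (p : ℕ) (L : Type) [Field L] [Fintype L] [CharP L p] (x : L) : ℂ :=
  letI : Algebra (ZMod p) L := ZMod.algebra L p
  zetaP p ^ (Algebra.trace (ZMod p) L x).val

/-- `ψ_{a,b}(E) = Σ_{(x,y)∈E} ψ(ax+by)`. -/
def psiSum (p : ℕ) (L : Type) [Field L] [Fintype L] [CharP L p]
    (a b : L) (E : Set (L × L)) : ℂ :=
  ∑ᶠ z ∈ E, psiL p L (a * z.1 + b * z.2)

/-- a subset of `F_{q²} × F_{q²}` of type Q. -/
def IsTypeQ (p q : ℕ) (L : Type) [Field L] [Fintype L] [CharP L p]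
    (E : Set (L × L)) : Prop :=
  E.ncard = (q ^ 4 - 1) / 4 ∧
    ∀ a b : L, (a, b) ≠ ((0 : L), (0 : L)) →
      psiSum p L a b E = ((q : ℂ) ^ 2 - 1) / 4 ∨
      psiSum p L a b E = (-3 * (q : ℂ) ^ 2 - 1) / 4

/-- the cyclotomic class `C_i^{(N,q²)} = ω^i⟨ω^N⟩`. -/
def cyc (L : Type) [Field L] (ω : L) (N i : ℕ) : Set L :=
  {x | ∃ k : ℕ, x = ω ^ i * (ω ^ N) ^ k}

/-- ω is a primitive element (generator of the multiplicative group). -/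
def IsPrim (L : Type) [Field L] (ω : L) : Prop :=
  ∀ x : L, x ≠ 0 → ∃ n : ℕ, x = ω ^ n

section helpers
open Finset
variable {K L : Type} [Field K] [Fintype K] [Field L] [Fintype L] [Algebra K L]

/-- Sum of an anti-invariant function vanishes. -/
lemma tq_sum_zero (g : L → ℂ) (μ : L) (hμ : μ ≠ 0) (hg : ∀ w, g (μ * w) = - g w) :
    ∑ w, g w = 0 := by
  have h : ∑ w, g (μ * w) = ∑ w, g w :=
    Equiv.sum_comp (Equiv.mulLeft₀ μ hμ) g
  simp only [hg, sum_neg_distrib] at h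
  linear_combination (-1/2) * h

open Classical in
lemma tq_ker (h2 : Module.finrank K L = 2) (δ : L) (hδ : δ ≠ 0)
    (hδT : Algebra.trace K L δ = 0) (w : L) (hw : Algebra.trace K L w = 0) :
    ∃ c : K, w = algebraMap K L c * δ := by
  have hsurj : Function.Surjective (Algebra.trace K L) := Algebra.trace_surjective K L
  have h := LinearMap.finrank_range_add_finrank_ker (Algebra.trace K L)
  rw [LinearMap.range_eq_top.2 hsurj, h2, finrank_top, Module.finrank_self] at h
  have h1 : Module.finrank K (LinearMap.ker (Algebra.trace K L)) = 1 := by omega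
  have := (finrank_eq_one_iff_of_nonzero' (⟨δ, hδT⟩ : LinearMap.ker (Algebra.trace K L))
    (by simpa [Subtype.ext_iff] using hδ)).1 h1 ⟨w, hw⟩
  obtain ⟨c, hc⟩ := this
  refine ⟨c, ?_⟩
  rw [← Algebra.smul_def]
  exact (congrArg Subtype.val hc).symm

open Classical in
lemma tq_kersum (h2 : Module.finrank K L = 2) (δ : L) (hδ : δ ≠ 0)
    (hδT : Algebra.trace K L δ = 0) (g : L → ℂ) (g0 : g 0 = 0)
    (ginv : ∀ (c : K) (w : L), c ≠ 0 → g (algebraMap K L c * w) = g w) :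
    ∑ w, (if Algebra.trace K L w = 0 then g w else 0) = ((Fintype.card K : ℂ) - 1) * g δ := by
  rw [← sum_filter]
  have himg : univ.filter (fun w => Algebra.trace K L w = 0)
      = univ.image (fun c : K => algebraMap K L c * δ) := by
    ext w
    simp only [mem_filter, mem_univ, true_and, mem_image]
    constructor
    · intro hw
      obtain ⟨c, hc⟩ := tq_ker h2 δ hδ hδT w hw
      exact ⟨c, hc.symm⟩
    · rintro ⟨c, rfl⟩
      rw [← Algebra.smul_def, map_smul, hδT, smul_zero]
  rw [himg, sum_image]
  · rw [← add_sum_erase univ _ (mem_univ (0 : K))]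
    rw [sum_congr rfl (g := fun _ => g δ) (fun c hc => ginv c δ (ne_of_mem_erase hc))]
    simp only [map_zero, zero_mul, g0, zero_add, sum_const, nsmul_eq_mul]
    rw [card_erase_of_mem (mem_univ _), card_univ, Nat.cast_sub Fintype.card_pos]
    simp
  · intro c _ d _ h
    exact (algebraMap K L).injective (mul_right_cancel₀ hδ h)

open Classical in
lemma tq_unitsum (F : K → ℂ) (x : K) :
    ∑ c : K, (if c = 0 then 0 else F (c * x)) =
      (∑ c, F c - F 0) +
        (if x = 0 then (Fintype.card K : ℂ) * F 0 - ∑ c, F c else 0) := by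
  have key : ∀ f : K → ℂ, ∑ c : K, (if c = 0 then 0 else f c) = ∑ c, f c - f 0 := by
    intro f
    rw [← add_sum_erase univ f (mem_univ (0 : K)),
      ← add_sum_erase univ (fun c => if c = 0 then 0 else f c) (mem_univ (0 : K))]
    rw [sum_congr rfl (g := f) (fun c hc => if_neg (ne_of_mem_erase hc))]
    simp
  rw [key (fun c => F (c * x))]
  by_cases hx : x = 0
  · subst hx; simp
  · have : ∑ c, F (c * x) = ∑ c, F c := Equiv.sum_comp (Equiv.mulRight₀ x hx) F
    simp [hx, this]

open Classical in
lemma tq_A (h2 : Module.finrank K L = 2) (δ : L) (hδ : δ ≠ 0)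
    (hδT : Algebra.trace K L δ = 0) (g : L → ℂ) (g0 : g 0 = 0)
    (ginv : ∀ (c : K) (w : L), c ≠ 0 → g (algebraMap K L c * w) = g w)
    (gs : ∑ w, g w = 0) (F : K → ℂ) :
    ∑ w, F (Algebra.trace K L w) * g w = g δ * (Fintype.card K * F 0 - ∑ c, F c) := by
  have hq : ((Fintype.card K : ℂ) - 1) ≠ 0 := by
    have : 1 < Fintype.card K := Fintype.one_lt_card
    have : (1 : ℂ) ≠ Fintype.card K := by exact_mod_cast this.ne
    exact sub_ne_zero.2 this.symm
  have h1 : ∀ c : K, c ≠ 0 → ∑ w, F (c * Algebra.trace K L w) * g w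
      = ∑ w, F (Algebra.trace K L w) * g w := by
    intro c hc
    have hc' : algebraMap K L c ≠ 0 := by simpa using hc
    rw [← Equiv.sum_comp (Equiv.mulLeft₀ _ hc') (fun w => F (Algebra.trace K L w) * g w)]
    refine sum_congr rfl fun w _ => ?_
    simp only [Equiv.mulLeft₀_apply]
    rw [ginv c w hc, ← Algebra.smul_def, map_smul, smul_eq_mul]
  have h2' : ∑ c : K, (if c = 0 then 0 else ∑ w, F (c * Algebra.trace K L w) * g w)
      = ((Fintype.card K : ℂ) - 1) * ∑ w, F (Algebra.trace K L w) * g w := by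
    have := tq_unitsum (K := K) (fun _ => ∑ w, F (Algebra.trace K L w) * g w) 1
    simp only [one_ne_zero, if_false, sum_const, card_univ, nsmul_eq_mul, add_zero] at this
    rw [sub_mul, one_mul, ← this]
    refine sum_congr rfl fun c _ => ?_
    split_ifs with hc
    · rfl
    · exact h1 c hc
  have h3 : ∑ c : K, (if c = 0 then 0 else ∑ w, F (c * Algebra.trace K L w) * g w)
      = ∑ w, (∑ c : K, (if c = 0 then 0 else F (c * Algebra.trace K L w))) * g w := by
    simp_rw [sum_mul]
    rw [sum_comm]
    refine sum_congr rfl fun c _ => ?_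
    split_ifs <;> simp
  have h4 : ∑ w, (∑ c : K, (if c = 0 then 0 else F (c * Algebra.trace K L w))) * g w
      = (∑ c, F c - F 0) * ∑ w, g w + ((Fintype.card K : ℂ) * F 0 - ∑ c, F c) *
        ∑ w, (if Algebra.trace K L w = 0 then g w else 0) := by
    rw [mul_sum, mul_sum, ← sum_add_distrib]
    refine sum_congr rfl fun w _ => ?_
    rw [tq_unitsum]
    split_ifs <;> ring
  rw [gs, tq_kersum h2 δ hδ hδT g g0 ginv] at h4
  apply mul_left_cancel₀ hq
  rw [← h2', h3, h4]
  ring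

lemma tq_pair (h2 : Module.finrank K L = 2) (δ : L) (hδ : δ ≠ 0)
    (hδT : Algebra.trace K L δ = 0) (μ : L) (hμ : ∀ c : K, μ ≠ algebraMap K L c)
    (F G : K → ℂ) :
    ∑ w, F (Algebra.trace K L w) * G (Algebra.trace K L (w * μ))
      = (∑ c, F c) * ∑ c, G c := by
  have hinj : Function.Injective
      (fun w : L => (Algebra.trace K L w, Algebra.trace K L (w * μ))) := by
    intro x y hxy
    simp only [Prod.mk.injEq] at hxy
    have e1 : Algebra.trace K L (x - y) = 0 := by rw [map_sub, hxy.1, sub_self]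
    have e2 : Algebra.trace K L ((x - y) * μ) = 0 := by rw [sub_mul, map_sub, hxy.2, sub_self]
    obtain ⟨c, hc⟩ := tq_ker h2 δ hδ hδT _ e1
    rw [hc, mul_assoc, ← Algebra.smul_def, map_smul, smul_eq_mul] at e2
    rcases mul_eq_zero.1 e2 with h | h
    · rw [h] at hc
      simp only [map_zero, zero_mul] at hc
      exact sub_eq_zero.1 hc
    · obtain ⟨d, hd⟩ := tq_ker h2 δ hδ hδT _ h
      exfalso
      apply hμ d
      apply mul_left_cancel₀ hδ
      rw [hd, mul_comm]
  have hbij : Function.Bijective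
      (fun w : L => (Algebra.trace K L w, Algebra.trace K L (w * μ))) := by
    rw [Fintype.bijective_iff_injective_and_card]
    refine ⟨hinj, ?_⟩
    rw [Fintype.card_prod, Module.card_eq_pow_finrank (K := K) (V := L), h2, sq]
  rw [sum_mul_sum, ← sum_product', univ_product_univ]
  exact (Equiv.ofBijective _ hbij).sum_comp (fun z : K × K => F z.1 * G z.2)

open Classical in
lemma tq_B (h2 : Module.finrank K L = 2) (δ : L) (hδ : δ ≠ 0)
    (hδT : Algebra.trace K L δ = 0) (η : L → ℂ) (η0 : η 0 = 0)
    (ηinv : ∀ (c : K) (w : L), c ≠ 0 → η (algebraMap K L c * w) = η w)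
    (μ : L) (hμ : μ ≠ 0) (hη : ∀ w, η (μ * w) = - η w)
    (ψ : L → ℂ) (F : K → ℂ) (hF : ∀ w, ψ w = F (Algebra.trace K L w))
    (F0 : F 0 = 1) (Fs : ∑ c, F c = 0) (z : L) :
    ∑ x, η x * ψ (x * z) = Fintype.card K * η (δ / z) := by
  by_cases hz : z = 0
  · subst hz
    simp only [mul_zero, div_zero, η0, ← sum_mul]
    rw [tq_sum_zero η μ hμ hη, zero_mul]
  · have h := tq_A h2 δ hδ hδT (fun w => η (w / z)) (by simp [η0])
      (fun c w hc => by rw [mul_div_assoc, ηinv c _ hc])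
      (tq_sum_zero _ μ hμ (fun w => by rw [mul_div_assoc, hη])) F
    rw [F0, Fs, mul_one, sub_zero] at h
    rw [mul_comm, ← h, ← Equiv.sum_comp (Equiv.mulRight₀ z hz)
      (fun w => F (Algebra.trace K L w) * η (w / z))]
    refine sum_congr rfl fun x _ => ?_
    simp only [Equiv.mulRight₀_apply]
    rw [mul_div_cancel_right₀ _ hz, hF, mul_comm]

/-- The value of the character sum, in unfolded form. -/
noncomputable def tqV (η : L → ℂ) (σ : ℂ) (s₀ s₁ : L → ℂ) (ψ : L → ℂ) (e : L → ℂ) (a b : L) : ℂ :=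
  ∑ x, ∑ y, ((e x + η x) / 2 * (s₀ y * (1 - s₁ y)) + (e x - η x) / 2 * (s₁ y * (1 - s₀ y)))
      * ψ (x * (a + b * y))
    + ∑ x, (e x + σ * η x) / 2 * ψ (x * b)

lemma tq_V1 (η : L → ℂ) (σ : ℂ) (s₀ s₁ : L → ℂ) (ψ : L → ℂ) (e : L → ℂ) (Q : ℂ) (R : L → ℂ)
    (P : L → ℂ) (hR : ∀ z, ∑ x, η x * ψ (x * z) = Q * R z)
    (hP : ∀ z, ∑ x, e x * ψ (x * z) = P z) (a b : L) :
    tqV η σ s₀ s₁ ψ e a b =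
      1 / 2 * ∑ y, (s₀ y + s₁ y - 2 * (s₀ y * s₁ y)) * P (a + b * y)
      + Q / 2 * (∑ y, s₀ y * R (a + b * y) - ∑ y, s₁ y * R (a + b * y))
      + 1 / 2 * (P b + σ * (Q * R b)) := by
  unfold tqV
  congr 1
  · rw [sum_comm, mul_sum, ← sum_sub_distrib, mul_sum, ← sum_add_distrib]
    refine sum_congr rfl fun y _ => ?_
    have h1 := hR (a + b * y)
    have h2 := hP (a + b * y)
    have : ∑ x, ((e x + η x) / 2 * (s₀ y * (1 - s₁ y)) + (e x - η x) / 2 * (s₁ y * (1 - s₀ y)))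
      * ψ (x * (a + b * y)) = 1 / 2 * (s₀ y + s₁ y - 2 * (s₀ y * s₁ y)) *
        (∑ x, e x * ψ (x * (a + b * y))) + 1 / 2 * (s₀ y - s₁ y) *
        ∑ x, η x * ψ (x * (a + b * y)) := by
      rw [mul_sum, mul_sum, ← sum_add_distrib]
      refine sum_congr rfl fun x _ => ?_
      ring
    rw [this, h1, h2]
    ring
  · rw [← hR, ← hP, mul_sum, ← sum_add_distrib, mul_sum]
    refine sum_congr rfl fun x _ => ?_
    ring

open Classical in
lemma tq_main (h2 : Module.finrank K L = 2) (δ : L) (hδ : δ ≠ 0)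
    (hδT : Algebra.trace K L δ = 0) (η : L → ℂ) (η0 : η 0 = 0)
    (η1 : ∀ x, x ≠ 0 → η x = 1 ∨ η x = -1)
    (ηinv : ∀ (c : K) (w : L), c ≠ 0 → η (algebraMap K L c * w) = η w)
    (μ : L) (hμ : μ ≠ 0) (hη : ∀ w, η (μ * w) = - η w)
    (ψ : L → ℂ) (F : K → ℂ) (hF : ∀ w, ψ w = F (Algebra.trace K L w))
    (F0 : F 0 = 1) (Fs : ∑ c, F c = 0)
    (hψ : ∀ z, ∑ x, ψ (x * z) = if z = 0 then (Fintype.card K : ℂ) ^ 2 else 0)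
    (σ : ℂ) (hσ : σ ^ 2 = 1) (hσδ : ∀ x, η (δ * x) = - σ * η x)
    (t₀ t₁ : K → ℂ) (N : ℂ) (hN : 2 * N = (Fintype.card K : ℂ) - 1)
    (ht₀ : ∑ c, t₀ c = N) (ht₁ : ∑ c, t₁ c = N)
    (ht₀' : ∀ c, t₀ c = 0 ∨ t₀ c = 1) (ht₁' : ∀ c, t₁ c = 0 ∨ t₁ c = 1) (a b : L) :
    let V := tqV η σ (fun y => t₀ (Algebra.trace K L y)) (fun y => t₁ (Algebra.trace K L (y * μ)))
      ψ (fun x => if x = 0 then 0 else 1) a b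
    ((a, b) = (0, 0) → V = ((Fintype.card K : ℂ) ^ 4 - 1) / 4) ∧
    ((a, b) ≠ (0, 0) → V = ((Fintype.card K : ℂ) ^ 2 - 1) / 4 ∨
      V = (-3 * (Fintype.card K : ℂ) ^ 2 - 1) / 4) := by
  intro V
  have hμK : ∀ c : K, μ ≠ algebraMap K L c := by
    intro c hc
    have hc0 : c ≠ 0 := by
      rintro rfl
      simp [hμ] at hc
    have e1 := hη 1
    rw [hc, ηinv c 1 hc0] at e1
    rcases η1 1 one_ne_zero with h | h <;> rw [h] at e1 <;> norm_num at e1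
  have hF00 : ψ 0 = 1 := by rw [hF, map_zero, F0]
  have hV := tq_V1 η σ (fun y => t₀ (Algebra.trace K L y))
    (fun y => t₁ (Algebra.trace K L (y * μ))) ψ (fun x => if x = 0 then 0 else 1)
    (Fintype.card K) (fun z => η (δ / z))
    (fun z => (if z = 0 then (Fintype.card K : ℂ) ^ 2 else 0) - 1)
    (tq_B h2 δ hδ hδT η η0 ηinv μ hμ hη ψ F hF F0 Fs)
    (by
      intro z
      rw [← hψ z, eq_sub_iff_add_eq]
      rw [← add_sum_erase univ _ (mem_univ (0 : L)),
        ← add_sum_erase univ (fun x => ψ (x * z)) (mem_univ (0 : L))]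
      simp only [if_true, zero_mul, hF00, zero_add]
      rw [add_comm]
      congr 1
      refine sum_congr rfl fun x hx => ?_
      rw [if_neg (ne_of_mem_erase hx), one_mul]) a b
  change V = _ at hV
  set Q : ℂ := (Fintype.card K : ℂ) with hQ
  have hp := fun F G => tq_pair h2 δ hδ hδT μ hμK F G
  have hs0 : ∑ y, t₀ (Algebra.trace K L y) = Q * N := by
    have := hp t₀ (fun _ => 1)
    simpa [ht₀, ← hQ, mul_comm] using this
  have hs1 : ∑ y, t₁ (Algebra.trace K L (y * μ)) = Q * N := by
    have := hp (fun _ => 1) t₁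
    simpa [ht₁, ← hQ, mul_comm] using this
  have hs01 : ∑ y, t₀ (Algebra.trace K L y) * t₁ (Algebra.trace K L (y * μ)) = N * N := by
    have := hp t₀ t₁
    rwa [ht₀, ht₁] at this
  have hH : ∑ y, (t₀ (Algebra.trace K L y) + t₁ (Algebra.trace K L (y * μ)) -
      2 * (t₀ (Algebra.trace K L y) * t₁ (Algebra.trace K L (y * μ)))) = 2 * Q * N - 2 * N * N := by
    rw [sum_sub_distrib, sum_add_distrib, ← mul_sum, hs0, hs1, hs01]
    ring
  have hN' : N = (Q - 1) / 2 := by rw [← hN]; ring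
  by_cases hb : b = 0
  · subst hb
    simp only [zero_mul, add_zero, ← sum_mul, hs0, hs1, hH, sub_self, mul_zero, div_zero, η0,
      if_true] at hV
    constructor
    · intro h
      simp only [Prod.mk.injEq, and_true] at h
      rw [if_pos h] at hV
      rw [hV, hN']
      ring
    · intro h
      simp only [ne_eq, Prod.mk.injEq, and_true] at h
      rw [if_neg h] at hV
      left
      rw [hV, hN']
      ring
  · refine ⟨fun h => absurd (Prod.mk.inj h).2 hb, fun _ => ?_⟩
    set y₀ : L := -a / b with hy₀
    have hab : ∀ y, a + b * y = b * (y - y₀) := by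
      intro y
      rw [hy₀]
      field_simp
      ring
    have hz : ∀ y, (a + b * y = 0 ↔ y = y₀) := by
      intro y
      rw [hab, mul_eq_zero, sub_eq_zero]
      simp [hb]
    set e := η (1 / b) with he
    have he1 : e = 1 ∨ e = -1 := η1 _ (by simpa using hb)
    have hηb : η (δ / b) = - σ * e := by rw [he, ← hσδ, mul_one_div]
    have hηinv' : ∀ w, η (w / μ) = - η w := by
      intro w
      have := hη (w / μ)
      rw [mul_div_cancel₀ _ hμ] at this
      rw [this, neg_neg]
    have hηKinv : ∀ (c : K) (w : L), c ≠ 0 → η (w / algebraMap K L c) = η w := by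
      intro c w hc
      have hc' : algebraMap K L c ≠ 0 := by simpa using hc
      have := ηinv c (w / algebraMap K L c) hc
      rwa [mul_div_cancel₀ _ hc', eq_comm] at this
    have gs : ∑ w, η (δ / (b * w)) = 0 :=
      tq_sum_zero (fun w => η (δ / (b * w))) μ hμ (fun w => by
        rw [← hηinv']; congr 1; rw [div_div]; ring)
    have hA : ∀ F : K → ℂ, ∑ w, F (Algebra.trace K L w) * η (δ / (b * w)) =
        e * (Q * F 0 - ∑ c, F c) := by
      intro F
      have := tq_A h2 δ hδ hδT (fun w => η (δ / (b * w))) (by simp [η0])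
        (fun c w hc => by
          rw [← hηKinv c (δ / (b * w)) hc]; congr 1; rw [div_div]; ring) gs F
      rw [this]
      congr 2
      field_simp
    have hsh : ∀ (F : K → ℂ) (k : K), ∑ c, F (c + k) = ∑ c, F c := fun F k =>
      Equiv.sum_comp (Equiv.addRight k) F
    have S0 : ∑ y, t₀ (Algebra.trace K L y) * η (δ / (a + b * y)) =
        e * (Q * t₀ (Algebra.trace K L y₀) - N) := by
      have := hA (fun c => t₀ (c + Algebra.trace K L y₀))
      rw [hsh, ht₀, zero_add] at this
      rw [← this, ← Equiv.sum_comp (Equiv.addRight y₀)]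
      refine sum_congr rfl fun w _ => ?_
      simp only [Equiv.coe_addRight]
      rw [hab, add_sub_cancel_right, map_add]
    have S1 : ∑ y, t₁ (Algebra.trace K L (y * μ)) * η (δ / (a + b * y)) =
        - (e * (Q * t₁ (Algebra.trace K L (y₀ * μ)) - N)) := by
      have := hA (fun c => t₁ (c + Algebra.trace K L (y₀ * μ)))
      rw [hsh, ht₁, zero_add] at this
      rw [← this, ← Equiv.sum_comp (Equiv.addRight y₀),
        ← Equiv.sum_comp (Equiv.mulRight₀ μ hμ)
          (fun w => t₁ (Algebra.trace K L w + Algebra.trace K L (y₀ * μ)) * η (δ / (b * w))), ← sum_neg_distrib]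
      refine sum_congr rfl fun w _ => ?_
      simp only [Equiv.coe_addRight, Equiv.mulRight₀_apply]
      rw [hab, add_sub_cancel_right, add_mul, map_add, ← mul_neg, ← hη]
      congr 2
      field_simp
    have S2 : ∑ y, (t₀ (Algebra.trace K L y) + t₁ (Algebra.trace K L (y * μ)) -
      2 * (t₀ (Algebra.trace K L y) * t₁ (Algebra.trace K L (y * μ)))) *
        ((if a + b * y = 0 then Q ^ 2 else 0) - 1) =
        Q ^ 2 * (t₀ (Algebra.trace K L y₀) + t₁ (Algebra.trace K L (y₀ * μ)) -
      2 * (t₀ (Algebra.trace K L y₀) * t₁ (Algebra.trace K L (y₀ * μ))))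
        - (2 * Q * N - 2 * N * N) := by
      simp only [hz, mul_sub, mul_one, sum_sub_distrib (f := fun y => _ * (ite _ _ _))]
      rw [sum_sub_distrib, ← hH]
      simp
      ring
    rw [S0, S1, S2, if_neg hb, hηb] at hV
    rw [hV, hN']
    rcases ht₀' (Algebra.trace K L y₀) with h0 | h0 <;>
    rcases ht₁' (Algebra.trace K L (y₀ * μ)) with h1 | h1 <;>
    rcases he1 with h | h <;> rw [h0, h1, h] <;>
    first
    | (left; linear_combination (-Q / 2) * hσ)
    | (right; linear_combination (-Q / 2) * hσ)
    | (left; linear_combination (Q / 2) * hσ)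
    | (right; linear_combination (Q / 2) * hσ)

end helpers
section concrete
open Finset

lemma tq_prim {L : Type} [Field L] [Fintype L] (ω : L) (hω : IsPrim L ω)
    (hc : 2 < Fintype.card L) :
    ω ≠ 0 ∧ ∀ i j : ℕ, ω ^ i = ω ^ j ↔ i ≡ j [MOD Fintype.card L - 1] := by
  classical
  have h0 : ω ≠ 0 := by
    rintro rfl
    have hsub : (univ : Finset L) ⊆ {0, 1} := by
      intro x _
      by_cases hx : x = 0
      · simp [hx]
      · obtain ⟨n, hn⟩ := hω x hx
        rcases Nat.eq_zero_or_pos n with h | h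
        · simp [hn, h]
        · exact absurd (hn.trans (zero_pow h.ne')) hx
    have h1 := card_le_card hsub
    have h2 : #({0, 1} : Finset L) ≤ 2 := card_le_two
    rw [card_univ] at h1
    omega
  refine ⟨h0, fun i j => ?_⟩
  have hord : orderOf (Units.mk0 ω h0) = Fintype.card L - 1 := by
    rw [orderOf_eq_card_of_forall_mem_zpowers, Nat.card_eq_fintype_card, Fintype.card_units]
    intro x
    obtain ⟨n, hn⟩ := hω x x.ne_zero
    refine ⟨n, ?_⟩
    ext
    simp [hn]
  rw [← hord, ← pow_eq_pow_iff_modEq, Units.ext_iff]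
  simp

lemma tq_cyc {L : Type} [Field L] (ω : L) (M N : ℕ) (hNM : N ∣ M)
    (hpow : ∀ i j : ℕ, ω ^ i = ω ^ j ↔ i ≡ j [MOD M]) (hM : 0 < M) (i n : ℕ) :
    ω ^ n ∈ cyc L ω N i ↔ n ≡ i [MOD N] := by
  constructor
  · rintro ⟨k, hk⟩
    rw [← pow_mul, ← pow_add, hpow] at hk
    have := hk.of_dvd hNM
    refine this.trans ?_
    simp [Nat.ModEq]
  · intro h
    -- choose a representative of `n` above `i`
    have hN : 0 < N := Nat.pos_of_dvd_of_pos hNM hM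
    have h' : n + M * i ≡ i [MOD N] := by
      have : M * i ≡ 0 [MOD N] := (Nat.modEq_zero_iff_dvd).2 (hNM.mul_right i)
      simpa using h.add this
    have hle : i ≤ n + M * i := by nlinarith
    obtain ⟨k, hk⟩ := (Nat.modEq_iff_dvd' hle).1 h'.symm
    refine ⟨k, ?_⟩
    rw [← pow_mul, ← pow_add, hpow, ← hk]
    have : i + (n + M * i - i) = n + M * i := by omega
    rw [this]
    simp [Nat.ModEq]

/-- The index set dichotomy. -/
lemma tq_dich (m : ℕ) (hm : 0 < m) (Kst : Finset ℕ) (hKsub : ∀ k ∈ Kst, k < 2 * m)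
    (hKcard : Kst.card = m) (hKdisj : ∀ k ∈ Kst, (k + m) % (2 * m) ∉ Kst) (n : ℕ) :
    (n + m) % (2 * m) ∈ Kst ↔ n % (2 * m) ∉ Kst := by
  have hmm : ∀ k, ((k % (2 * m)) + m) % (2 * m) = (k + m) % (2 * m) := by
    intro k; simp
  have hlt : ∀ k, k % (2 * m) < 2 * m := fun k => Nat.mod_lt _ (by omega)
  have hsh : ∀ k, k < 2 * m → (k + m) % (2 * m) = if k < m then k + m else k - m := by
    intro k hk
    split_ifs with h
    · exact Nat.mod_eq_of_lt (by omega)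
    · rw [Nat.mod_eq_sub_mod (by omega)]
      rw [Nat.mod_eq_of_lt (by omega)]; omega
  constructor
  · intro h h'
    have := hKdisj _ h'
    rw [hmm] at this
    exact this h
  · intro h
    by_contra h'
    let I := Kst.image (fun k => (k + m) % (2 * m))
    have hI : I.card = m := by
      rw [card_image_of_injOn, hKcard]
      intro x hx y hy hxy
      have h1 := hKsub x hx
      have h2 := hKsub y hy
      simp only [hsh x h1, hsh y h2] at hxy
      split_ifs at hxy <;> omega
    have hd : Disjoint Kst I := by
      rw [disjoint_left]
      intro x hx hxI
      obtain ⟨k, hk, rfl⟩ := mem_image.1 hxI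
      exact hKdisj k hk hx
    have hU : (Kst ∪ I) = range (2 * m) := by
      apply eq_of_subset_of_card_le
      · intro x hx
        rw [mem_range]
        rcases mem_union.1 hx with hx | hx
        · exact hKsub x hx
        · obtain ⟨k, hk, rfl⟩ := mem_image.1 hx
          exact hlt _
      · rw [card_union_of_disjoint hd, hI, hKcard, card_range]; omega
    have hn : n % (2 * m) ∈ Kst ∪ I := by rw [hU, mem_range]; exact hlt _
    rcases mem_union.1 hn with hn | hn
    · exact h hn
    · obtain ⟨k, hk, hkn⟩ := mem_image.1 hn
      apply h'
      have h1 := hKsub k hk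
      have : (n + m) % (2 * m) = k := by
        rw [← hmm, ← hkn]
        have h3 := hlt (k + m)
        rw [hsh _ h3, hsh k h1]
        split_ifs <;> omega
      rwa [this]

lemma tq_oddcof (v r : ℕ) :
    ∃ d, (2 * v + 1) ^ (2 * r + 1) + 1 = (2 * v + 1 + 1) * (2 * d + 1) := by
  induction r with
  | zero => exact ⟨0, by ring⟩
  | succ r ih =>
    obtain ⟨d, hd⟩ := ih
    refine ⟨d * (2 * v + 1) ^ 2 + 2 * v ^ 2 + v, ?_⟩
    have e : (2 * v + 1) ^ (2 * (r + 1) + 1) = (2 * v + 1) ^ (2 * r + 1) * (2 * v + 1) ^ 2 := by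
      rw [← pow_add]; congr 1
    rw [e]
    zify at hd ⊢
    linear_combination (2 * (v : ℤ) + 1) ^ 2 * hd

lemma tq_parity (p s q m l t : ℕ) (hp : p.Prime) (hpodd : p ≠ 2) (hs : 0 < s) (hq : q = p ^ s)
    (hm : 0 < m) (hdvd : 2 * m ∣ q + 1) (hldvd : 2 * m ∣ p ^ l + 1) (ht : s = l * t) :
    (Even ((p ^ l + 1) / (2 * m)) ∧ Odd t) ↔ Even ((q + 1) / (2 * m)) := by
  have hpo : Odd p := hp.odd_of_ne_two hpodd
  have hPo : Odd (p ^ l) := hpo.pow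
  have hqP : q = (p ^ l) ^ t := by rw [hq, ht, pow_mul]
  rcases Nat.even_or_odd t with hte | hto
  · have h1 : ¬ Odd t := Nat.not_odd_iff_even.2 hte
    simp only [h1, and_false, false_iff]
    obtain ⟨r, hr⟩ := hte
    have hq2 : q = ((p ^ l) ^ r) ^ 2 := by rw [hqP, hr, ← pow_mul (p ^ l) r 2, mul_two]
    obtain ⟨w, hw⟩ : Odd ((p ^ l) ^ r) := hPo.pow
    intro hev
    obtain ⟨v, hv⟩ := hev
    have hmul := Nat.div_mul_cancel hdvd
    rw [hv, hq2, hw] at hmul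
    have h4 : 4 ∣ (2 * w + 1) ^ 2 + 1 := ⟨v * m, by rw [← hmul]; ring⟩
    have h5 : (2 * w + 1) ^ 2 + 1 = 4 * (w ^ 2 + w) + 2 := by ring
    rw [h5] at h4
    omega
  · simp only [hto, and_true]
    obtain ⟨c, hc⟩ : ∃ c, q + 1 = (p ^ l + 1) * c ∧ Odd c := by
      obtain ⟨r, hr⟩ := hto
      obtain ⟨v, hv⟩ := hPo
      obtain ⟨d, hd⟩ := tq_oddcof v r
      exact ⟨2 * d + 1, by rw [hqP, hr, hv, hd], ⟨d, rfl⟩⟩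
    obtain ⟨d, hd⟩ := hldvd
    have e1 : (p ^ l + 1) / (2 * m) = d := by rw [hd]; exact Nat.mul_div_cancel_left _ (by omega)
    have e2 : (q + 1) / (2 * m) = d * c := by
      rw [hc.1, hd, mul_assoc]; exact Nat.mul_div_cancel_left _ (by omega)
    rw [e1, e2, Nat.even_mul]
    simp [Nat.not_even_iff_odd.2 hc.2]

lemma tq_psi (p : ℕ) (hp : p.Prime) (K L : Type) [Field K] [Fintype K] [Field L] [Fintype L]
    [Algebra K L] [CharP L p] :
    ∃ F : K → ℂ, (∀ w : L, psiL p L w = F (Algebra.trace K L w)) ∧ F 0 = 1 ∧ ∑ c, F c = 0 ∧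
      ∀ z : L, ∑ x, psiL p L (x * z) = Set.indicator {0} (fun _ => (Fintype.card L : ℂ)) z := by
  classical
  have : Fact p.Prime := ⟨hp⟩
  have : CharP K p := (algebraMap K L).charP (algebraMap K L).injective p
  let _ : Algebra (ZMod p) L := ZMod.algebra L p
  let _ : Algebra (ZMod p) K := ZMod.algebra K p
  have : IsScalarTower (ZMod p) K L := IsScalarTower.of_algebraMap_eq' (Subsingleton.elim _ _)
  have hζ : IsPrimitiveRoot (zetaP p) p := Complex.isPrimitiveRoot_exp p hp.ne_zero
  let χ : AddChar (ZMod p) ℂ := AddChar.zmodChar p hζ.pow_eq_one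
  have hχ : χ 1 ≠ 1 := by
    have : χ 1 = zetaP p ^ (1 : ZMod p).val := rfl
    rw [this, ZMod.val_one]
    simpa using hζ.ne_one hp.one_lt
  let ψK : AddChar K ℂ := χ.compAddMonoidHom (Algebra.trace (ZMod p) K).toAddMonoidHom
  let ψL : AddChar L ℂ := χ.compAddMonoidHom (Algebra.trace (ZMod p) L).toAddMonoidHom
  have hψK : ψK ≠ 1 := by
    obtain ⟨k, hk⟩ := Algebra.trace_surjective (ZMod p) K 1
    rw [AddChar.ne_one_iff]
    refine ⟨k, ?_⟩
    have : ψK k = χ (Algebra.trace (ZMod p) K k) := rfl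
    rwa [this, hk]
  have hψL : ψL ≠ 1 := by
    obtain ⟨k, hk⟩ := Algebra.trace_surjective (ZMod p) L 1
    rw [AddChar.ne_one_iff]
    refine ⟨k, ?_⟩
    have : ψL k = χ (Algebra.trace (ZMod p) L k) := rfl
    rwa [this, hk]
  have hψ : ∀ w, psiL p L w = ψL w := fun w => rfl
  refine ⟨ψK, ?_, ψK.map_zero_eq_one, AddChar.sum_eq_zero_of_ne_one hψK, ?_⟩
  · intro w
    rw [hψ]
    change χ (Algebra.trace (ZMod p) L w) = χ (Algebra.trace (ZMod p) K (Algebra.trace K L w))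
    rw [Algebra.trace_trace]
  · intro z
    simp only [hψ]
    rw [AddChar.sum_mulShift z (AddChar.IsPrimitive.of_ne_one hψL)]
    by_cases hz : z = 0 <;> simp [hz]

open Classical in
lemma tq_psiSum {p : ℕ} {L : Type} [Field L] [Fintype L] [CharP L p]
    (D₀ D₁ Dε A₀ A₁ S₀ S₁ : Set L) (E₀ : Set (L × L)) (η s₀ s₁ : L → ℂ) (σ : ℂ)
    (h00 : (0 : L) ∉ D₀) (h01 : (0 : L) ∉ D₁)
    (hη0 : ∀ x, x = 0 → η x = 0) (hηD₀ : ∀ x ∈ D₀, η x = 1) (hηD₁ : ∀ x ∈ D₁, η x = -1)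
    (hD : ∀ x, x ≠ 0 → (x ∈ D₁ ↔ x ∉ D₀))
    (hσ : (σ = 1 ∧ Dε = D₀) ∨ (σ = -1 ∧ Dε = D₁))
    (hs₀ : ∀ y, s₀ y = if y ∈ S₀ then 1 else 0) (hs₁ : ∀ y, s₁ y = if y ∈ S₁ then 1 else 0)
    (hA₀ : A₀ = S₀ \ S₁) (hA₁ : A₁ = S₁ \ S₀)
    (hE₀ : E₀ = {w | ∃ x ∈ D₀, ∃ y ∈ A₀, w = (x, x * y)} ∪
      {w | ∃ x ∈ D₁, ∃ y ∈ A₁, w = (x, x * y)} ∪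
      {w | ∃ x ∈ Dε, w = ((0 : L), x)}) (a b : L) :
    psiSum p L a b E₀ = tqV η σ s₀ s₁ (psiL p L) (fun x => if x = 0 then 0 else 1) a b := by
  have hmem0 : ∀ z, ((0 : L), z) ∈ E₀ ↔ z ∈ Dε := by
    intro z
    rw [hE₀]
    simp only [Set.mem_union, Set.mem_setOf_eq, Prod.mk.injEq]
    constructor
    · rintro ((⟨x, hx, y, _, h, _⟩ | ⟨x, hx, y, _, h, _⟩) | ⟨x, hx, _, h⟩)
      · exact absurd (h ▸ hx) h00
      · exact absurd (h ▸ hx) h01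
      · exact h ▸ hx
    · intro h
      exact Or.inr ⟨z, h, trivial, rfl⟩
  have hmem : ∀ x y, x ≠ 0 → ((x, x * y) ∈ E₀ ↔ (x ∈ D₀ ∧ y ∈ A₀ ∨ x ∈ D₁ ∧ y ∈ A₁)) := by
    intro x y hx
    rw [hE₀]
    simp only [Set.mem_union, Set.mem_setOf_eq, Prod.mk.injEq]
    constructor
    · rintro ((⟨x', hx', y', hy', h, h'⟩ | ⟨x', hx', y', hy', h, h'⟩) | ⟨x', hx', h, _⟩)
      · subst h
        rw [mul_left_cancel₀ hx h']
        exact Or.inl ⟨hx', hy'⟩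
      · subst h
        rw [mul_left_cancel₀ hx h']
        exact Or.inr ⟨hx', hy'⟩
      · exact absurd h hx
    · rintro (⟨h, h'⟩ | ⟨h, h'⟩)
      · exact Or.inl (Or.inl ⟨x, h, y, h', rfl, rfl⟩)
      · exact Or.inl (Or.inr ⟨x, h, y, h', rfl, rfl⟩)
  unfold psiSum tqV
  rw [finsum_mem_def, finsum_eq_sum_of_fintype, Fintype.sum_prod_type]
  have key : ∀ x : L, ∑ z, E₀.indicator (fun z => psiL p L (a * z.1 + b * z.2)) (x, z) =
      ∑ y, (((if x = 0 then 0 else 1) + η x) / 2 * (s₀ y * (1 - s₁ y)) +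
        ((if x = 0 then 0 else 1) - η x) / 2 * (s₁ y * (1 - s₀ y))) * psiL p L (x * (a + b * y)) +
      (if x = 0 then ∑ z, ((if z = 0 then 0 else 1) + σ * η z) / 2 * psiL p L (z * b) else 0) := by
    intro x
    by_cases hx : x = 0
    · subst hx
      simp only [hη0 0 rfl, if_true, add_zero, sub_zero, zero_div, zero_mul, sum_const_zero,
        zero_add, mul_zero]
      refine sum_congr rfl fun z _ => ?_
      rw [Set.indicator_apply, hmem0, mul_comm z b]
      by_cases hz : z = 0
      · subst hz
        have : (0 : L) ∉ Dε := by rcases hσ with ⟨_, h⟩ | ⟨_, h⟩ <;> rw [h] <;> assumption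
        simp [this, hη0 0 rfl]
      · by_cases hzD : z ∈ D₀
        · have hz1 : z ∉ D₁ := fun h => (hD z hz).1 h hzD
          rcases hσ with ⟨h, h'⟩ | ⟨h, h'⟩ <;> simp [h, h', hz, hzD, hz1, hηD₀ z hzD]
        · have hz1 : z ∈ D₁ := (hD z hz).2 hzD
          rcases hσ with ⟨h, h'⟩ | ⟨h, h'⟩ <;> simp [h, h', hz, hzD, hz1, hηD₁ z hz1] <;> ring
    · rw [if_neg hx, if_neg hx, add_zero,
        ← Equiv.sum_comp (Equiv.mulLeft₀ x hx)
          (fun z => E₀.indicator (fun z => psiL p L (a * z.1 + b * z.2)) (x, z))]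
      refine sum_congr rfl fun y _ => ?_
      simp only [Equiv.mulLeft₀_apply]
      rw [Set.indicator_apply, hmem x y hx, hs₀, hs₁, hA₀, hA₁]
      have harg : a * x + b * (x * y) = x * (a + b * y) := by ring
      simp only [harg, Set.mem_diff]
      by_cases hzD : x ∈ D₀
      · have hz1 : x ∉ D₁ := fun h => (hD x hx).1 h hzD
        by_cases h1 : y ∈ S₀ <;> by_cases h2 : y ∈ S₁ <;> simp [hzD, hz1, hηD₀ x hzD, h1, h2]
      · have hz1 : x ∈ D₁ := (hD x hx).2 hzD
        by_cases h1 : y ∈ S₀ <;> by_cases h2 : y ∈ S₁ <;> simp [hzD, hz1, hηD₁ x hz1, h1, h2] <;>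
          ring
  rw [sum_congr rfl (fun x _ => key x), sum_add_distrib]
  simp

end concrete
/-- Theorem 3.2(1): if `|T₀| = |T₁| = (q−1)/2` then `E₀` is of type Q. -/
theorem semiprimitive_E0_typeQ
    (p s q m l t : ℕ) (hp : p.Prime) (hpodd : p ≠ 2) (hs : 0 < s) (hq : q = p ^ s)
    (hm : 0 < m) (hdvd : 2 * m ∣ q + 1)
    (hl : 0 < l) (hldvd : 2 * m ∣ p ^ l + 1)
    (hlmin : ∀ l', 0 < l' → 2 * m ∣ p ^ l' + 1 → l ≤ l')
    (ht : s = l * t)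
    (K L : Type) [Field K] [Fintype K] [Field L] [Fintype L] [Algebra K L] [CharP L p]
    (hK : Fintype.card K = q) (hL : Fintype.card L = q ^ 2)
    (ω : L) (hω : IsPrim L ω)
    (Kst : Finset ℕ) (hKsub : ∀ k ∈ Kst, k < 2 * m) (hKcard : Kst.card = m)
    (hKdisj : ∀ k ∈ Kst, (k + m) % (2 * m) ∉ Kst)
    (D₀ D₁ : Set L)
    (hD₀ : D₀ = ⋃ i ∈ Kst, cyc L ω (2 * m) i)
    (hD₁ : D₁ = ⋃ i ∈ Kst, cyc L ω (2 * m) (i + m))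
    (T₀ T₁ : Set K)
    (S₀ S₁ : Set L)
    (hS₀ : S₀ = {x : L | Algebra.trace K L x ∈ T₀})
    (hS₁ : S₁ = {x : L | Algebra.trace K L (x * ω ^ m) ∈ T₁})
    (ε : ℕ) (hε : ε = if Even ((p ^ l + 1) / (2 * m)) ∧ Odd t then 1 else 0)
    (Dε : Set L) (hDε : Dε = if ε = 0 then D₀ else D₁)
    (A₀ A₁ : Set L) (hA₀ : A₀ = S₀ \ S₁) (hA₁ : A₁ = S₁ \ S₀)
    (hT₀ : T₀.ncard = (q - 1) / 2) (hT₁ : T₁.ncard = (q - 1) / 2)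
    (E₀ : Set (L × L))
    (hE₀ : E₀ = {w | ∃ x ∈ D₀, ∃ y ∈ A₀, w = (x, x * y)} ∪
      {w | ∃ x ∈ D₁, ∃ y ∈ A₁, w = (x, x * y)} ∪
      {w | ∃ x ∈ Dε, w = ((0 : L), x)})
    : IsTypeQ p q L E₀ := by
  classical
  have hpo : Odd p := hp.odd_of_ne_two hpodd
  have hqo : Odd q := hq ▸ hpo.pow
  have hq3 : 3 ≤ q := by
    have h3 : 3 ≤ p := by
      have := hp.two_le
      omega
    rw [hq]
    exact h3.trans (Nat.le_self_pow hs.ne' p)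
  have h2 : Module.finrank K L = 2 := by
    have h := Module.card_eq_pow_finrank (K := K) (V := L)
    rw [hK, hL] at h
    exact (Nat.pow_right_injective (by omega) h).symm
  have hM : Fintype.card L - 1 = (q - 1) * (q + 1) := by
    rw [hL, mul_comm, ← Nat.sq_sub_sq, one_pow]
  obtain ⟨hω0, hpow⟩ := tq_prim ω hω (by rw [hL]; nlinarith)
  rw [hM] at hpow
  have hMpos : 0 < (q - 1) * (q + 1) := Nat.mul_pos (by omega) (by omega)
  have h2mM : 2 * m ∣ (q - 1) * (q + 1) := hdvd.mul_left _
  have hcyc := tq_cyc ω ((q - 1) * (q + 1)) (2 * m) h2mM hpow hMpos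
  have hdich := tq_dich m hm Kst hKsub hKcard hKdisj
  have hD0n : ∀ n : ℕ, ω ^ n ∈ D₀ ↔ n % (2 * m) ∈ Kst := by
    intro n
    rw [hD₀]
    simp only [Set.mem_iUnion, hcyc, exists_prop]
    constructor
    · rintro ⟨i, hi, h⟩
      rw [h, Nat.mod_eq_of_lt (hKsub i hi)]
      exact hi
    · intro h
      exact ⟨_, h, (Nat.mod_modEq _ _).symm⟩
  have hD1n : ∀ n : ℕ, ω ^ n ∈ D₁ ↔ (n + m) % (2 * m) ∈ Kst := by
    intro n
    rw [hD₁]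
    simp only [Set.mem_iUnion, hcyc, exists_prop]
    constructor
    · rintro ⟨i, hi, h⟩
      have h' : n + m ≡ i [MOD 2 * m] := by
        have := h.add_right m
        refine this.trans ?_
        have e : i + m + m = i + 2 * m := by ring
        rw [e]
        simp [Nat.ModEq]
      rw [h', Nat.mod_eq_of_lt (hKsub i hi)]
      exact hi
    · intro h
      refine ⟨_, h, ?_⟩
      have h1 : (n + m) % (2 * m) + m ≡ n + m + m [MOD 2 * m] :=
        (Nat.mod_modEq _ _).add_right m
      refine (h1.trans ?_).symm
      have e : n + m + m = n + 2 * m := by ring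
      rw [e]
      simp [Nat.ModEq]
  have hcyc0 : ∀ N i, (0 : L) ∉ cyc L ω N i := by
    rintro N i ⟨k, hk⟩
    exact (mul_ne_zero (pow_ne_zero _ hω0) (pow_ne_zero _ (pow_ne_zero _ hω0))) hk.symm
  have h00 : (0 : L) ∉ D₀ := by
    rw [hD₀]
    simp [hcyc0]
  have h01 : (0 : L) ∉ D₁ := by
    rw [hD₁]
    simp [hcyc0]
  have hD : ∀ x, x ≠ 0 → (x ∈ D₁ ↔ x ∉ D₀) := by
    intro x hx
    obtain ⟨n, rfl⟩ := hω x hx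
    rw [hD0n, hD1n, hdich]
  let η : L → ℂ := fun x => if x = 0 then 0 else if x ∈ D₀ then 1 else -1
  have hη0 : ∀ x, x = 0 → η x = 0 := fun x hx => by simp [η, hx]
  have hηD₀ : ∀ x ∈ D₀, η x = 1 := by
    intro x hx
    have : x ≠ 0 := fun h => h00 (h ▸ hx)
    simp [η, this, hx]
  have hηD₁ : ∀ x ∈ D₁, η x = -1 := by
    intro x hx
    have h : x ≠ 0 := fun h => h01 (h ▸ hx)
    have := (hD x h).1 hx
    simp [η, this, h]
  have hη1 : ∀ x, x ≠ 0 → η x = 1 ∨ η x = -1 := by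
    intro x hx
    by_cases h : x ∈ D₀
    · exact Or.inl (hηD₀ x h)
    · exact Or.inr (hηD₁ x ((hD x hx).2 h))
  have hηn : ∀ n : ℕ, η (ω ^ n) = if n % (2 * m) ∈ Kst then 1 else -1 := by
    intro n
    have : ω ^ n ≠ 0 := pow_ne_zero _ hω0
    simp [η, hω0, hD0n]
  have hημ : ∀ w, η (ω ^ m * w) = - η w := by
    intro w
    by_cases hw : w = 0
    · simp [η, hw]
    · obtain ⟨n, rfl⟩ := hω w hw
      rw [← pow_add, hηn, hηn, add_comm m n]
      by_cases h : n % (2 * m) ∈ Kst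
      · rw [if_neg (fun h' => (hdich n).1 h' h), if_pos h]
      · rw [if_pos ((hdich n).2 h), if_neg h, neg_neg]
  have hηinv : ∀ (c : K) (w : L), c ≠ 0 → η (algebraMap K L c * w) = η w := by
    intro c w hc
    by_cases hw : w = 0
    · simp [η, hw]
    · obtain ⟨n, rfl⟩ := hω w hw
      obtain ⟨k, hk⟩ := hω (algebraMap K L c) (by simpa using hc)
      have h1 : c ^ (q - 1) = 1 := by rw [← hK]; exact FiniteField.pow_card_sub_one_eq_one c hc
      have h3 : ω ^ (k * (q - 1)) = ω ^ 0 := by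
        rw [pow_mul, ← hk, ← map_pow, h1, map_one, pow_zero]
      rw [hpow, Nat.modEq_zero_iff_dvd, mul_comm (q - 1)] at h3
      have h4 : q + 1 ∣ k := Nat.dvd_of_mul_dvd_mul_right (by omega) h3
      obtain ⟨j, rfl⟩ := hdvd.trans h4
      rw [hk, ← pow_add, hηn, hηn]
      simp
  obtain ⟨u, hu⟩ := hdvd
  have hu' : (q + 1) / (2 * m) = u := by
    rw [hu]; exact Nat.mul_div_cancel_left _ (by omega)
  have hpar := tq_parity p s q m l t hp hpodd hs hq hm ⟨u, hu⟩ hldvd ht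
  rw [hu'] at hpar
  have hmu : 2 * (m * u) = q + 1 := by rw [hu]; ring
  let δ : L := ω ^ (m * u)
  have hδ : δ ≠ 0 := pow_ne_zero _ hω0
  have hδq : δ ^ (q - 1) = -1 := by
    have e1 : (δ ^ (q - 1)) ^ 2 = 1 := by
      have : (δ ^ (q - 1)) ^ 2 = ω ^ 0 := by
        simp only [δ]
        rw [← pow_mul, ← pow_mul, hpow, Nat.modEq_zero_iff_dvd]
        exact ⟨1, by rw [← hmu]; ring⟩
      rw [this, pow_zero]
    rcases (sq_eq_one_iff.1 e1) with h | h
    · exfalso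
      have h' : ω ^ (m * u * (q - 1)) = ω ^ 0 := by rw [pow_mul, pow_zero]; exact h
      rw [hpow, Nat.modEq_zero_iff_dvd] at h'
      have hle := Nat.le_of_dvd (Nat.mul_pos (by omega) (by omega)) h'
      rw [← hmu] at hle
      have : 0 < m * u * (q - 1) := Nat.mul_pos (by omega) (by omega)
      nlinarith
    · exact h
  have hδT : Algebra.trace K L δ = 0 := by
    apply (algebraMap K L).injective
    rw [FiniteField.algebraMap_trace_eq_sum_pow, h2, map_zero, Finset.sum_range_succ,
      Finset.sum_range_one, pow_zero, pow_one, pow_one]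
    have e : Nat.card K = (q - 1) + 1 := by rw [Nat.card_eq_fintype_card, hK]; omega
    rw [e, pow_succ, hδq]
    ring
  let σ : ℂ := if Even u then -1 else 1
  have hσ2 : σ ^ 2 = 1 := by
    simp only [σ]
    split_ifs <;> norm_num
  have hpw : ∀ (k : ℕ) (x : L), η (ω ^ (m * k) * x) = (-1) ^ k * η x := by
    intro k
    induction k with
    | zero => intro x; simp
    | succ k ih =>
      intro x
      rw [Nat.mul_succ, pow_add, mul_assoc, ih, hημ, pow_succ]
      ring
  have hσδ : ∀ x, η (δ * x) = - σ * η x := by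
    intro x
    simp only [δ, σ, hpw]
    split_ifs with h
    · rw [h.neg_one_pow]; ring
    · rw [(Nat.not_even_iff_odd.1 h).neg_one_pow]
  have hσD : (σ = 1 ∧ Dε = D₀) ∨ (σ = -1 ∧ Dε = D₁) := by
    rw [hDε, hε]
    simp only [hpar, σ]
    by_cases h : Even u <;> simp [h]
  obtain ⟨F, hF, F0, Fs, hψ⟩ := tq_psi p hp K L
  have hQ : (Fintype.card K : ℂ) = q := by rw [hK]
  let t₀ : K → ℂ := fun c => if c ∈ T₀ then 1 else 0
  let t₁ : K → ℂ := fun c => if c ∈ T₁ then 1 else 0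
  have hsum : ∀ T : Set K, ∑ c, (if c ∈ T then (1 : ℂ) else 0) = T.ncard := by
    intro T
    rw [Finset.sum_boole, Set.ncard_eq_toFinset_card']
    congr 2
    ext c
    simp
  have hmain := tq_main h2 δ hδ hδT η (hη0 0 rfl) hη1 hηinv (ω ^ m) (pow_ne_zero _ hω0) hημ
    (psiL p L) F hF F0 Fs
    (by
      intro z
      rw [hψ z, hL, hQ]
      by_cases hz : z = 0 <;> simp [hz])
    σ hσ2 hσδ t₀ t₁ (((q - 1) / 2 : ℕ) : ℂ)
    (by
      rw [hQ]
      obtain ⟨r, hr⟩ := hqo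
      have : (q - 1) / 2 = r := by omega
      rw [this, hr]
      push_cast
      ring)
    (by simp only [t₀]; rw [hsum, hT₀]) (by simp only [t₁]; rw [hsum, hT₁])
    (by intro c; simp only [t₀]; split_ifs <;> simp)
    (by intro c; simp only [t₁]; split_ifs <;> simp)
  have hV := tq_psiSum (p := p) D₀ D₁ Dε A₀ A₁ S₀ S₁ E₀ η
    (fun y => t₀ (Algebra.trace K L y)) (fun y => t₁ (Algebra.trace K L (y * ω ^ m))) σ
    h00 h01 hη0 hηD₀ hηD₁ hD hσD
    (by intro y; simp only [t₀, hS₀, Set.mem_setOf_eq])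
    (by intro y; simp only [t₁, hS₁, Set.mem_setOf_eq]) hA₀ hA₁ hE₀
  refine ⟨?_, ?_⟩
  · have h := (hmain 0 0).1 rfl
    rw [← hV 0 0, hQ] at h
    have hcount : psiSum p L 0 0 E₀ = E₀.ncard := by
      have hψ0 : psiL p L 0 = 1 := by rw [hF, map_zero, F0]
      unfold psiSum
      simp only [zero_mul, add_zero, hψ0]
      rw [finsum_mem_def, finsum_eq_sum_of_fintype, Set.ncard_eq_toFinset_card']
      simp only [Set.indicator_apply]
      rw [Finset.sum_boole]
      congr 2
      ext c
      simp
    rw [hcount] at h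
    have h4 : 4 * E₀.ncard + 1 = q ^ 4 := by
      have : (4 * (E₀.ncard : ℂ) + 1) = (q : ℂ) ^ 4 := by rw [h]; ring
      exact_mod_cast this
    omega
  · intro a b hab
    have h := (hmain a b).2 hab
    rw [← hV a b, hQ] at h
    exact h

end
end

section
/- In the semi-primitive cyclotomic setting with |T_0| = |T_1| = (q−1)/2, define E_0 = {(x,xy) : x ∈ D_0, y ∈ A_0} ∪ {(x,xy) : x ∈ D_1, y ∈ A_1} ∪ {(0,x) : x ∈ D_ε}. Then for every a ∈ F_{q²} with a ≠ 0, ψ_{a,0}(E_0) = (q²−1)/4. -/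
noncomputable section

lemma aux_psi_sum (p : ℕ) (hp : p.Prime) (L : Type) [Field L] [Fintype L] [CharP L p] :
    psiL p L 0 = 1 ∧ ∑ x : L, psiL p L x = 0 := by
  haveI : Fact p.Prime := ⟨hp⟩
  letI : Algebra (ZMod p) L := ZMod.algebra L p
  have hz : IsPrimitiveRoot (zetaP p) p := Complex.isPrimitiveRoot_exp p hp.ne_zero
  have hprim := AddChar.zmodChar_primitive_of_primitive_root p hz
  set χ := AddChar.zmodChar p ((IsPrimitiveRoot.iff_def _ p).mp hz).left with hχ
  set ψ := χ.compAddMonoidHom (Algebra.trace (ZMod p) L).toAddMonoidHom with hψ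
  have hval : ∀ x : L, psiL p L x = ψ x := fun x => rfl
  refine ⟨by rw [hval]; simp, ?_⟩
  simp only [hval]
  apply AddChar.sum_eq_zero_of_ne_one
  rw [AddChar.ne_one_iff]
  obtain ⟨y, hy⟩ := Algebra.trace_surjective (ZMod p) L 1
  refine ⟨y, ?_⟩
  have h1 : ψ y = χ 1 := by rw [← hy]; rfl
  have h2 : χ 1 = zetaP p := by
    rw [hχ, AddChar.zmodChar_apply, ZMod.val_one, pow_one]
  rw [h1, h2]
  exact hz.ne_one hp.one_lt

lemma aux_part_sum {L : Type} [Field L] [Fintype L] (D A : Set L) (h0 : (0 : L) ∉ D)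
    (g : L → ℂ) :
    ∑ᶠ z ∈ {w : L × L | ∃ x ∈ D, ∃ y ∈ A, w = (x, x * y)}, g z.1
      = A.ncard * ∑ᶠ x ∈ D, g x := by
  classical
  have hinj : Set.InjOn (fun w : L × L => (w.1, w.1 * w.2)) (D.toFinset ×ˢ A.toFinset : Finset (L × L)) := by
    rintro ⟨x, y⟩ hx ⟨x', y'⟩ hx' h
    simp at hx hx' h
    obtain ⟨hxx, h⟩ := h
    have hx0 : x ≠ 0 := fun h => h0 (h ▸ hx.1)
    rw [← hxx] at h
    rw [← hxx, mul_left_cancel₀ hx0 h]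
  have e : {w : L × L | ∃ x ∈ D, ∃ y ∈ A, w = (x, x * y)} =
      ((D.toFinset ×ˢ A.toFinset).image (fun w : L × L => (w.1, w.1 * w.2)) : Finset (L × L)) := by
    ext ⟨u, v⟩
    simp only [Set.mem_setOf_eq, Finset.coe_image, Set.mem_image, Finset.mem_coe,
      Finset.mem_product, Set.mem_toFinset, Prod.exists, Prod.mk.injEq]
    constructor
    · rintro ⟨x, hx, y, hy, rfl, rfl⟩
      exact ⟨_, _, ⟨hx, hy⟩, rfl, rfl⟩
    · rintro ⟨x, y, ⟨hx, hy⟩, rfl, rfl⟩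
      exact ⟨_, hx, _, hy, rfl, rfl⟩
  rw [e, finsum_mem_coe_finset, Finset.sum_image hinj, Finset.sum_product]
  have e2 : ∑ᶠ x ∈ D, g x = ∑ x ∈ D.toFinset, g x := by
    rw [← finsum_mem_coe_finset, Set.coe_toFinset]
  rw [e2, Finset.mul_sum, Set.ncard_eq_toFinset_card' A]
  simp

lemma aux_cyc {L : Type} [Field L] [Fintype L] {ω : L} (h0 : ω ≠ 0) {N : ℕ}
    (hN : N ∣ orderOf ω) (i n : ℕ) : ω ^ n ∈ cyc L ω N i ↔ n ≡ i [MOD N] := by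
  have hfin : IsOfFinOrder ω := isOfFinOrder_iff_isUnit.mpr (IsUnit.mk0 _ h0)
  have hpos : 0 < orderOf ω := hfin.orderOf_pos
  constructor
  · rintro ⟨k, hk⟩
    rw [← pow_mul, ← pow_add] at hk
    have h := hfin.pow_eq_pow_iff_modEq.1 hk
    have h2 : n ≡ i + N * k [MOD N] := Nat.ModEq.of_dvd hN h
    exact h2.trans (by simp [Nat.ModEq])
  · intro h
    have h1 : i ≡ n + orderOf ω * i [MOD N] := by
      obtain ⟨c, hc⟩ := hN
      rw [hc]
      refine h.symm.trans ?_
      simp [Nat.ModEq, mul_assoc]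
    obtain ⟨k, hk⟩ := (Nat.modEq_iff_dvd' (by nlinarith)).1 h1
    refine ⟨k, ?_⟩
    rw [← pow_mul, ← pow_add, ← hk, Nat.add_sub_cancel' (by nlinarith), pow_add, pow_mul,
      pow_orderOf_eq_one, one_pow, mul_one]

lemma aux_mod (m : ℕ) (hm : 0 < m) (Kst : Finset ℕ) (hKsub : ∀ k ∈ Kst, k < 2 * m)
    (hKcard : Kst.card = m) (hKdisj : ∀ k ∈ Kst, (k + m) % (2 * m) ∉ Kst) (r : ℕ) :
    r % (2 * m) ∈ Kst ↔ (r + m) % (2 * m) ∉ Kst := by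
  classical
  have hadd : (r + m) % (2 * m) = (r % (2 * m) + m) % (2 * m) := by simp
  constructor
  · intro h
    rw [hadd]; exact hKdisj _ h
  · intro h
    by_contra hr
    let f : ℕ → ℕ := fun k => (k + m) % (2 * m)
    have finv : ∀ k < 2 * m, f (f k) = k := by
      intro k hk
      simp only [f, Nat.mod_add_mod]
      rw [show k + m + m = k + 2 * m by ring, Nat.add_mod_right, Nat.mod_eq_of_lt hk]
    have hcard : (Kst.image f).card = m := by
      rw [Finset.card_image_of_injOn, hKcard]
      intro x hx y hy hxy
      rw [← finv x (hKsub x hx), ← finv y (hKsub y hy)]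
      exact congrArg f hxy
    have hdis : Disjoint Kst (Kst.image f) := by
      rw [Finset.disjoint_right]
      intro x hx
      obtain ⟨k, hk, rfl⟩ := Finset.mem_image.1 hx
      exact hKdisj k hk
    have hun : Kst ∪ Kst.image f = Finset.range (2 * m) := by
      apply Finset.eq_of_subset_of_card_le
      · intro x hx
        rw [Finset.mem_range]
        rcases Finset.mem_union.1 hx with h | h
        · exact hKsub x h
        · obtain ⟨k, hk, rfl⟩ := Finset.mem_image.1 h
          exact Nat.mod_lt _ (by omega)
      · rw [Finset.card_union_of_disjoint hdis, hcard, hKcard, Finset.card_range]; omega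
    have hmem : r % (2 * m) ∈ Kst ∪ Kst.image f := by
      rw [hun, Finset.mem_range]; exact Nat.mod_lt _ (by omega)
    rcases Finset.mem_union.1 hmem with h' | h'
    · exact hr h'
    · obtain ⟨k, hk, hk2⟩ := Finset.mem_image.1 h'
      apply h
      rw [hadd, ← hk2]
      have h3 : f (f k) ∈ Kst := by rw [finv k (hKsub k hk)]; exact hk
      exact h3

lemma aux_count {K L : Type} [Field K] [Fintype K] [Field L] [Fintype L] [Algebra K L] (q : ℕ)
    (hq1 : 1 < q) (hK : Fintype.card K = q) (hL : Fintype.card L = q ^ 2) (c : L)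
    (hc : c ^ q ≠ c) (U V : Set K) :
    {x : L | Algebra.trace K L x ∈ U ∧ Algebra.trace K L (x * c) ∈ V}.ncard
      = U.ncard * V.ncard := by
  have hfr : Module.finrank K L = 2 := by
    have := Module.card_eq_pow_finrank (K := K) (V := L)
    rw [hL, hK] at this
    exact (Nat.pow_right_injective hq1 this).symm
  have htr : ∀ x : L, algebraMap K L (Algebra.trace K L x) = x + x ^ q := by
    intro x
    rw [FiniteField.algebraMap_trace_eq_sum_pow, hfr, Nat.card_eq_fintype_card, hK]
    simp [Finset.sum_range_succ]
  let φ : L →ₗ[K] K × K := (Algebra.trace K L).prod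
    ((Algebra.trace K L).comp (LinearMap.mulRight K c))
  have hinj : Function.Injective φ := by
    rw [← LinearMap.ker_eq_bot, LinearMap.ker_eq_bot']
    intro x hx
    have h1 : Algebra.trace K L x = 0 := congrArg Prod.fst hx
    have h2 : Algebra.trace K L (x * c) = 0 := congrArg Prod.snd hx
    have e1 := htr x
    have e2 := htr (x * c)
    rw [h1, map_zero] at e1
    rw [h2, map_zero, mul_pow] at e2
    have : x * (c ^ q - c) = 0 := by linear_combination e2 - c ^ q * e1
    rcases mul_eq_zero.1 this with h | h
    · exact h
    · exact absurd (sub_eq_zero.1 h) hc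
  have hbij : Function.Bijective φ := by
    rw [Fintype.bijective_iff_injective_and_card]
    refine ⟨hinj, ?_⟩
    rw [Fintype.card_prod, hK, hL, sq]
  have : {x : L | Algebra.trace K L x ∈ U ∧ Algebra.trace K L (x * c) ∈ V} = φ ⁻¹' (U ×ˢ V) := rfl
  rw [this, Set.ncard_preimage_of_injective_subset_range hinj, Set.ncard_prod]
  rw [hbij.surjective.range_eq]; exact Set.subset_univ _

/-- Lemma 3.3: for `b = 0`, `a ≠ 0`, `ψ_{a,0}(E₀) = (q²−1)/4`. -/
theorem semiprimitive_E0_char_b_zero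
    (p s q m l t : ℕ) (hp : p.Prime) (hpodd : p ≠ 2) (hs : 0 < s) (hq : q = p ^ s)
    (hm : 0 < m) (hdvd : 2 * m ∣ q + 1)
    (hl : 0 < l) (hldvd : 2 * m ∣ p ^ l + 1)
    (hlmin : ∀ l', 0 < l' → 2 * m ∣ p ^ l' + 1 → l ≤ l')
    (ht : s = l * t)
    (K L : Type) [Field K] [Fintype K] [Field L] [Fintype L] [Algebra K L] [CharP L p]
    (hK : Fintype.card K = q) (hL : Fintype.card L = q ^ 2)
    (ω : L) (hω : IsPrim L ω)
    (Kst : Finset ℕ) (hKsub : ∀ k ∈ Kst, k < 2 * m) (hKcard : Kst.card = m)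
    (hKdisj : ∀ k ∈ Kst, (k + m) % (2 * m) ∉ Kst)
    (D₀ D₁ : Set L)
    (hD₀ : D₀ = ⋃ i ∈ Kst, cyc L ω (2 * m) i)
    (hD₁ : D₁ = ⋃ i ∈ Kst, cyc L ω (2 * m) (i + m))
    (T₀ T₁ : Set K)
    (S₀ S₁ : Set L)
    (hS₀ : S₀ = {x : L | Algebra.trace K L x ∈ T₀})
    (hS₁ : S₁ = {x : L | Algebra.trace K L (x * ω ^ m) ∈ T₁})
    (ε : ℕ) (hε : ε = if Even ((p ^ l + 1) / (2 * m)) ∧ Odd t then 1 else 0)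
    (Dε : Set L) (hDε : Dε = if ε = 0 then D₀ else D₁)
    (A₀ A₁ : Set L) (hA₀ : A₀ = S₀ \ S₁) (hA₁ : A₁ = S₁ \ S₀)
    (hT₀ : T₀.ncard = (q - 1) / 2) (hT₁ : T₁.ncard = (q - 1) / 2)
    (E₀ : Set (L × L))
    (hE₀ : E₀ = {w | ∃ x ∈ D₀, ∃ y ∈ A₀, w = (x, x * y)} ∪
      {w | ∃ x ∈ D₁, ∃ y ∈ A₁, w = (x, x * y)} ∪
      {w | ∃ x ∈ Dε, w = ((0 : L), x)})
    : ∀ a : L, a ≠ 0 → psiSum p L a 0 E₀ = ((q : ℂ) ^ 2 - 1) / 4 := by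
  intro a ha
  classical
  have hq1 : 1 < q := by rw [hq]; exact Nat.one_lt_pow hs.ne' hp.one_lt
  obtain ⟨d, hd⟩ := hdvd
  have hdpos : 0 < d := by
    rcases Nat.eq_zero_or_pos d with h | h
    · subst h; omega
    · exact h
  obtain ⟨j, hj⟩ : ∃ j, q = 2 * j + 1 := by
    have : q + 1 = 2 * (m * d) := by rw [hd]; ring
    exact ⟨m * d - 1, by omega⟩
  have hmlt : m < q + 1 := by rw [hd]; nlinarith
  -- order of the primitive element
  have hω0 : ω ≠ 0 := by
    rintro rfl
    have key : ∀ x : L, x ≠ 0 → x = 1 := by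
      intro x hx
      obtain ⟨n, hn⟩ := hω x hx
      rcases Nat.eq_zero_or_pos n with h | h
      · simpa [h] using hn
      · rw [zero_pow h.ne'] at hn; exact absurd hn hx
    have hle : Fintype.card L ≤ ({0, 1} : Finset L).card := by
      rw [← Finset.card_univ]
      apply Finset.card_le_card
      intro x _
      by_cases hx : x = 0
      · simp [hx]
      · simp [key x hx]
    have := Finset.card_le_two (a := (0 : L)) (b := 1)
    rw [hL] at hle
    nlinarith
  have hord : orderOf ω = q ^ 2 - 1 := by
    have hu : ∀ x : Lˣ, x ∈ Subgroup.zpowers (Units.mk0 ω hω0) := by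
      intro x
      obtain ⟨n, hn⟩ := hω x x.ne_zero
      refine ⟨n, ?_⟩
      ext
      simp [hn]
    have h := orderOf_eq_card_of_forall_mem_zpowers hu
    rw [← orderOf_units, Units.val_mk0, Nat.card_eq_fintype_card, Fintype.card_units, hL] at h
    exact h
  have hq2 : q ^ 2 - 1 = (q + 1) * (q - 1) := by
    rw [hj]; simp only [Nat.add_sub_cancel]
    have : (2 * j + 1) ^ 2 = (2 * j + 1 + 1) * (2 * j) + 1 := by ring
    omega
  have hNdvd : 2 * m ∣ orderOf ω := by
    rw [hord, hq2, hd, mul_assoc]; exact dvd_mul_right _ _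
  have hc : (ω ^ m) ^ q ≠ ω ^ m := by
    intro h
    have h1 : ω ^ (m * (q - 1)) = 1 := by
      apply mul_right_cancel₀ (pow_ne_zero m hω0)
      rw [one_mul, ← pow_add, ← h, ← pow_mul]
      congr 1
      rw [hj, Nat.add_sub_cancel]; ring
    have h2 := Nat.le_of_dvd (Nat.mul_pos hm (by omega)) (orderOf_dvd_of_pow_eq_one h1)
    rw [hord, hq2] at h2
    have := Nat.le_of_mul_le_mul_right h2 (by omega)
    omega
  -- counting
  have hcomplT : ∀ T : Set K, T.ncard = (q - 1) / 2 → T.ncard = j ∧ Tᶜ.ncard = j + 1 := by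
    intro T hT
    have := Set.ncard_compl T
    rw [Nat.card_eq_fintype_card, hK] at this
    omega
  have hcA₀ : A₀.ncard = j * (j + 1) := by
    have h := aux_count q hq1 hK hL (ω ^ m) hc T₀ T₁ᶜ
    rw [(hcomplT T₀ hT₀).1, (hcomplT T₁ hT₁).2] at h
    rw [← h, hA₀, hS₀, hS₁]; rfl
  have hcA₁ : A₁.ncard = j * (j + 1) := by
    have h := aux_count q hq1 hK hL (ω ^ m) hc T₀ᶜ T₁
    rw [(hcomplT T₀ hT₀).2, (hcomplT T₁ hT₁).1, mul_comm] at h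
    rw [← h, hA₁, hS₀, hS₁]
    congr 1
    ext x
    exact and_comm
  -- membership
  have hm0 : ∀ n, ω ^ n ∈ D₀ ↔ n % (2 * m) ∈ Kst := by
    intro n
    simp only [hD₀, Set.mem_iUnion, exists_prop, aux_cyc hω0 hNdvd]
    constructor
    · rintro ⟨i, hi, h⟩
      rw [show n % (2 * m) = i from Eq.trans h (Nat.mod_eq_of_lt (hKsub i hi))]; exact hi
    · intro h
      exact ⟨_, h, (Nat.mod_modEq _ _).symm⟩
  have hm1' : ∀ n, ω ^ (n + m) ∈ D₁ ↔ ω ^ n ∈ D₀ := by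
    intro n
    rw [hm0]
    simp only [hD₁, Set.mem_iUnion, exists_prop, aux_cyc hω0 hNdvd]
    constructor
    · rintro ⟨i, hi, h⟩
      have h := Nat.ModEq.add_right_cancel' m h
      rw [show n % (2 * m) = i from Eq.trans h (Nat.mod_eq_of_lt (hKsub i hi))]; exact hi
    · intro h
      exact ⟨_, h, (Nat.mod_modEq _ _).symm.add_right m⟩
  have hz0 : (0 : L) ∉ D₀ := by
    simp only [hD₀, Set.mem_iUnion, exists_prop]
    rintro ⟨i, _, k, hk⟩
    exact mul_ne_zero (pow_ne_zero _ hω0) (pow_ne_zero _ (pow_ne_zero _ hω0)) hk.symm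
  have hz1 : (0 : L) ∉ D₁ := by
    simp only [hD₁, Set.mem_iUnion, exists_prop]
    rintro ⟨i, _, k, hk⟩
    exact mul_ne_zero (pow_ne_zero _ hω0) (pow_ne_zero _ (pow_ne_zero _ hω0)) hk.symm
  have hexp : ∀ x : L, x ≠ 0 → ∃ n : ℕ, x = ω ^ (n + m) := by
    intro x hx
    obtain ⟨n, hn⟩ := hω (x * (ω ^ m)⁻¹) (mul_ne_zero hx (inv_ne_zero (pow_ne_zero _ hω0)))
    refine ⟨n, ?_⟩
    rw [pow_add, ← hn, inv_mul_cancel_right₀ (pow_ne_zero _ hω0)]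
  have hcomp : D₁ = (insert 0 D₀)ᶜ := by
    ext x
    by_cases hx : x = 0
    · subst hx; simp [hz1]
    · obtain ⟨n, rfl⟩ := hexp x hx
      simp only [Set.mem_compl_iff, Set.mem_insert_iff, hx, false_or]
      rw [hm1', hm0, hm0]
      exact aux_mod m hm Kst hKsub hKcard hKdisj n
  have hdisj : Disjoint D₀ D₁ := by
    rw [hcomp, Set.disjoint_compl_right_iff_subset]; exact Set.subset_insert _ _
  have hunion : D₀ ∪ D₁ = {0}ᶜ := by
    rw [hcomp]; ext x
    by_cases hx : x = 0
    · subst hx; simp [hz0]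
    · simp [hx, em]
  have hD1im : D₁ = (fun x => x * ω ^ m) '' D₀ := by
    ext x
    constructor
    · intro hx
      obtain ⟨n, rfl⟩ := hexp x (fun h => hz1 (h ▸ hx))
      exact ⟨ω ^ n, (hm1' n).1 hx, (pow_add _ _ _).symm⟩
    · rintro ⟨y, hy, rfl⟩
      obtain ⟨n, rfl⟩ := hω y (fun h => hz0 (h ▸ hy))
      show ω ^ n * ω ^ m ∈ D₁
      rw [← pow_add]; exact (hm1' n).2 hy
  have hcardeq : D₁.ncard = D₀.ncard := by
    rw [hD1im]
    exact Set.ncard_image_of_injective _ (mul_left_injective₀ (pow_ne_zero _ hω0))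
  have hcardsum : D₀.ncard + D₁.ncard = q ^ 2 - 1 := by
    rw [← Set.ncard_union_eq hdisj, hunion, Set.ncard_compl, Set.ncard_singleton,
      Nat.card_eq_fintype_card, hL]
  have hDεc : Dε.ncard = 2 * (j * (j + 1)) := by
    have h1 : Dε.ncard = D₀.ncard := by rw [hDε]; split_ifs <;> simp [hcardeq]
    have h2 : q ^ 2 - 1 = 4 * (j * (j + 1)) := by
      rw [hq2, hj, Nat.add_sub_cancel]; ring
    omega
  -- the character sum
  obtain ⟨hψ0, hψs⟩ := aux_psi_sum p hp L
  have hsum : ∑ᶠ x ∈ D₀, psiL p L (a * x) + ∑ᶠ x ∈ D₁, psiL p L (a * x) = -1 := by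
    rw [← finsum_mem_union hdisj (Set.toFinite _) (Set.toFinite _), hunion]
    have h1 : ∑ x : L, psiL p L (a * x) = 0 := by
      rw [← hψs]
      exact Fintype.sum_bijective _ (mulLeft_bijective₀ a ha) _ _ (fun _ => rfl)
    have h2 : (({0} : Set L)ᶜ) = (({0} : Finset L)ᶜ : Finset L) := by simp
    rw [h2, finsum_mem_coe_finset]
    have h3 := Finset.sum_add_sum_compl ({0} : Finset L) (fun x => psiL p L (a * x))
    rw [h1, Finset.sum_singleton, mul_zero, hψ0] at h3
    linear_combination h3
  have hlast : ∑ᶠ z ∈ {w : L × L | ∃ x ∈ Dε, w = ((0 : L), x)}, psiL p L (a * z.1)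
      = Dε.ncard := by
    have e : {w : L × L | ∃ x ∈ Dε, w = ((0 : L), x)} = (fun x => ((0 : L), x)) '' Dε := by
      ext w; constructor
      · rintro ⟨x, hx, rfl⟩; exact ⟨x, hx, rfl⟩
      · rintro ⟨x, hx, rfl⟩; exact ⟨x, hx, rfl⟩
    rw [e, finsum_mem_image (fun x _ y _ h => congrArg Prod.snd h)]
    simp only [mul_zero, hψ0]
    rw [← Set.coe_toFinset Dε, finsum_mem_coe_finset, Set.ncard_coe_finset]
    simp
  unfold psiSum
  simp only [zero_mul, add_zero]
  rw [hE₀, finsum_mem_union _ (Set.toFinite _) (Set.toFinite _),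
    finsum_mem_union _ (Set.toFinite _) (Set.toFinite _),
    aux_part_sum D₀ A₀ hz0 (fun x => psiL p L (a * x)),
    aux_part_sum D₁ A₁ hz1 (fun x => psiL p L (a * x)), hlast, hcA₀, hcA₁, hDεc, hj]
  · push_cast
    linear_combination ((j : ℂ) * (j + 1)) * hsum
  · rw [Set.disjoint_left]
    rintro w ⟨x, hx, y, _, rfl⟩ ⟨x', hx', y', _, h⟩
    have : x = x' := congrArg Prod.fst h
    exact Set.disjoint_left.1 hdisj hx (this ▸ hx')
  · rw [Set.disjoint_left]
    rintro w (⟨x, hx, y, _, rfl⟩ | ⟨x, hx, y, _, rfl⟩) ⟨x', _, h⟩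
    · have h5 : x = 0 := congrArg Prod.fst h
      exact hz0 (h5 ▸ hx)
    · have h5 : x = 0 := congrArg Prod.fst h
      exact hz1 (h5 ▸ hx)

end
end

section
/- In the semi-primitive cyclotomic setting with |T_0| = (q−1)/2 and |T_1| = (q+1)/2, define E_1 = {(x,xy) : x ∈ D_0, y ∈ A_0} ∪ {(x,xy) : x ∈ D_1, y ∈ A_1}. Then for every a ∈ F_{q²} with a ≠ 0, ψ_{a,0}(E_1) = (q²−1)/4 if a^{−1} ∈ D_ε, and ψ_{a,0}(E_1) = (−3q²−1)/4 otherwise. -/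
noncomputable section

theorem psi_sum_K (p : ℕ) (hp : p.Prime) (K L : Type) [Field K] [Fintype K] [Field L] [Fintype L]
    [Algebra K L] [CharP L p] [DecidableEq K] (c : L) :
    ∑ y : K, psiL p L (c * algebraMap K L y) =
      if Algebra.trace K L c = 0 then (Fintype.card K : ℂ) else 0 := by
  have : Fact p.Prime := ⟨hp⟩
  have : NeZero p := ⟨hp.ne_zero⟩
  have : CharP K p := ((algebraMap K L).charP_iff_charP p).mpr inferInstance
  let _ : Algebra (ZMod p) L := ZMod.algebra L p
  let _ : Algebra (ZMod p) K := ZMod.algebra K p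
  have : IsScalarTower (ZMod p) K L := IsScalarTower.of_algebraMap_eq' (Subsingleton.elim _ _)
  have hz : IsPrimitiveRoot (zetaP p) p := Complex.isPrimitiveRoot_exp p hp.ne_zero
  have key : ∀ y : K, psiL p L (c * algebraMap K L y) =
      zetaP p ^ (Algebra.trace (ZMod p) K (Algebra.trace K L c * y)).val := by
    intro y
    unfold psiL
    show zetaP p ^ (Algebra.trace (ZMod p) L _).val = _
    rw [← Algebra.trace_trace (S := K), mul_comm c, ← Algebra.smul_def, map_smul, smul_eq_mul,
      mul_comm y]
  simp_rw [key]
  split_ifs with h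
  · simp [h]
  · let φ : AddChar K ℂ := (AddChar.zmodChar p hz.pow_eq_one).compAddMonoidHom
      ((Algebra.trace (ZMod p) K).toAddMonoidHom.comp
        (AddMonoidHom.mulLeft (Algebra.trace K L c)))
    have hφ : ∀ y, φ y = zetaP p ^ (Algebra.trace (ZMod p) K (Algebra.trace K L c * y)).val := by
      intro y; rfl
    simp_rw [← hφ]
    apply AddChar.sum_eq_zero_of_ne_one
    rw [AddChar.ne_one_iff]
    have hne := Algebra.trace_ne_zero (ZMod p) K
    obtain ⟨z, hzz⟩ : ∃ z, Algebra.trace (ZMod p) K z ≠ 0 := by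
      by_contra hcon
      push Not at hcon
      exact hne (LinearMap.ext hcon)
    refine ⟨(Algebra.trace K L c)⁻¹ * z, ?_⟩
    rw [hφ, mul_inv_cancel_left₀ h]
    intro h1
    rw [hz.pow_eq_one_iff_dvd] at h1
    have := Nat.eq_zero_of_dvd_of_lt h1 (ZMod.val_lt _)
    exact hzz ((ZMod.val_eq_zero _).mp this)

theorem psi_sum_D (p : ℕ) (hp : p.Prime) (K L : Type) [Field K] [Fintype K] [Field L] [Fintype L]
    [Algebra K L] [CharP L p] [DecidableEq K] [DecidableEq L] (a : L) (D : Finset L)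
    (hD : ∀ y : K, y ≠ 0 → ∀ x ∈ D, x * algebraMap K L y ∈ D) :
    ((Fintype.card K : ℂ) - 1) * ∑ x ∈ D, psiL p L (a * x) =
      (Fintype.card K : ℂ) * (D.filter (fun x => Algebra.trace K L (a * x) = 0)).card - D.card := by
  have h1 : ∑ x ∈ D, ∑ y : K, psiL p L (a * x * algebraMap K L y) =
      (Fintype.card K : ℂ) * (D.filter (fun x => Algebra.trace K L (a * x) = 0)).card := by
    simp_rw [psi_sum_K p hp K L]
    rw [← Finset.sum_filter]
    simp [mul_comm]
  have h0 : psiL p L 0 = 1 := by simp [psiL]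
  have h2 : ∀ y ∈ Finset.univ.erase (0 : K), ∑ x ∈ D, psiL p L (a * x * algebraMap K L y) =
      ∑ x ∈ D, psiL p L (a * x) := by
    intro y hy
    have hy0 : y ≠ 0 := by simpa using hy
    have hy1 : algebraMap K L y ≠ 0 := by simpa using hy0
    refine Finset.sum_bij' (fun x _ => x * algebraMap K L y)
      (fun x _ => x * algebraMap K L y⁻¹) ?_ ?_ ?_ ?_ ?_
    · intro x hx; exact hD y hy0 x hx
    · intro x hx; exact hD _ (inv_ne_zero hy0) x hx
    · intro x _; simp [mul_assoc, hy1]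
    · intro x _; simp [mul_assoc, hy1]
    · intro x _; simp [mul_assoc]
  rw [Finset.sum_comm, ← Finset.add_sum_erase _ _ (Finset.mem_univ (0 : K)),
    Finset.sum_congr rfl h2] at h1
  simp [h0] at h1
  rw [← h1, Nat.cast_sub (Fintype.card_pos)]
  push_cast
  ring

theorem prim_facts (q : ℕ) (hq : 3 ≤ q) (L : Type) [Field L] [Fintype L]
    (hL : Fintype.card L = q ^ 2) (ω : L) (hω : IsPrim L ω) :
    ω ≠ 0 ∧ ∀ a b : ℕ, ω ^ a = ω ^ b ↔ a ≡ b [MOD (q ^ 2 - 1)] := by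
  classical
  have hω0 : ω ≠ 0 := by
    rintro rfl
    have : Fintype.card L ≤ 2 := by
      have : (Finset.univ : Finset L) ⊆ {0, 1} := by
        intro x _
        by_cases hx : x = 0
        · simp [hx]
        · obtain ⟨n, hn⟩ := hω x hx
          rcases n with _ | n
          · simp [hn]
          · simp [hn]
      exact (Finset.card_le_card this).trans (Finset.card_le_two)
    nlinarith
  refine ⟨hω0, ?_⟩
  have ho : orderOf (Units.mk0 ω hω0) = q ^ 2 - 1 := by
    rw [← hL, ← Fintype.card_units, ← Nat.card_eq_fintype_card]
    apply orderOf_eq_card_of_forall_mem_zpowers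
    intro x
    obtain ⟨n, hn⟩ := hω x x.ne_zero
    exact ⟨n, by ext; simp [hn]⟩
  intro a b
  rw [← ho, ← pow_eq_pow_iff_modEq, Units.ext_iff]
  simp

theorem trace_zero_exp (q : ℕ) (hq : 3 ≤ q) (hodd : Odd q) (K L : Type) [Field K] [Fintype K]
    [Field L] [Fintype L] [Algebra K L]
    (hK : Fintype.card K = q) (hL : Fintype.card L = q ^ 2) (ω : L) (hω : IsPrim L ω)
    (n : ℕ) (h : Algebra.trace K L (ω ^ n) = 0) : n ≡ (q + 1) / 2 [MOD (q + 1)] := by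
  obtain ⟨hω0, hmod⟩ := prim_facts q hq L hL ω hω
  have hfr : Module.finrank K L = 2 := by
    have := Module.card_eq_pow_finrank (K := K) (V := L)
    rw [hL, hK] at this
    exact (Nat.pow_right_injective (by omega : 2 ≤ q) this).symm
  have h1 := FiniteField.algebraMap_trace_eq_sum_pow K L (ω ^ n)
  rw [h, hfr, Nat.card_eq_fintype_card, hK] at h1
  simp [Finset.sum_range_succ] at h1
  obtain ⟨r, hr⟩ := hodd
  have hQ : q ^ 2 - 1 = (q + 1) * (2 * r) := by
    rw [hr]; zify [show 1 ≤ (2 * r + 1) ^ 2 from Nat.one_le_pow _ _ (by omega)]; ring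
  -- square
  have h2 : ω ^ (n * (q - 1)) = -1 := by
    have : ω ^ n * ω ^ (n * (q - 1)) = ω ^ n * (-1) := by
      rw [← pow_add]
      have : n + n * (q - 1) = n * q := by
        obtain ⟨k, rfl⟩ : ∃ k, q = k + 1 := ⟨q - 1, by omega⟩
        simp; ring
      rw [this, pow_mul]
      linear_combination -h1
    exact mul_left_cancel₀ (pow_ne_zero _ hω0) this
  have hm1 : (-1 : L) ≠ 1 := by
    intro hc
    rw [hc] at h2
    have hh : ω ^ (n * (q - 1)) = ω ^ 0 := by simpa using h2
    have h2' : ringChar L = 2 := by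
      by_contra hne
      exact Ring.neg_one_ne_one_of_char_ne_two hne hc
    have := FiniteField.even_card_of_char_two h2'
    rw [hL, hr] at this
    have : (2 * r + 1) ^ 2 % 2 = 1 := by
      rw [← Nat.odd_iff]; exact Odd.pow ⟨r, rfl⟩
    omega
  have h3 : ω ^ ((q + 1) * r) = -1 := by
    have hs : ω ^ ((q + 1) * r) * ω ^ ((q + 1) * r) = 1 := by
      rw [← pow_add, ← pow_zero ω, hmod, hQ]
      rw [show (q + 1) * r + (q + 1) * r = (q + 1) * (2 * r) by ring]
      exact Nat.modEq_zero_iff_dvd.mpr dvd_rfl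
    rcases mul_self_eq_one_iff.mp hs with h4 | h4
    · exfalso
      rw [← pow_zero ω, hmod, hQ] at h4
      have := Nat.le_of_dvd (by apply Nat.mul_pos <;> omega) (Nat.modEq_zero_iff_dvd.mp h4)
      nlinarith
    · exact h4
  have h5 := (hmod _ _).mp (h2.trans h3.symm)
  rw [hQ, show q - 1 = 2 * r by omega, show (q + 1) * (2 * r) = (2 * r) * (q + 1) by ring,
    show (q + 1) * r = (2 * r) * (r + 1) by rw [hr]; ring, mul_comm n] at h5
  have h6 := Nat.ModEq.mul_left_cancel' (by omega) h5
  rwa [show (q + 1) / 2 = r + 1 by omega]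

theorem trace_pair_card (q m : ℕ) (hq : 3 ≤ q) (hodd : Odd q) (hm : 0 < m) (hmq : m < q + 1)
    (K L : Type) [Field K] [Fintype K]
    [Field L] [Fintype L] [Algebra K L]
    (hK : Fintype.card K = q) (hL : Fintype.card L = q ^ 2) (ω : L) (hω : IsPrim L ω)
    (A B : Set K) :
    {x : L | Algebra.trace K L x ∈ A ∧ Algebra.trace K L (x * ω ^ m) ∈ B}.ncard =
      A.ncard * B.ncard := by
  let f : L →ₗ[K] K × K := (Algebra.trace K L).prod
    ((Algebra.trace K L).comp (LinearMap.mulRight K (ω ^ m)))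
  have hf : ∀ x, f x = (Algebra.trace K L x, Algebra.trace K L (x * ω ^ m)) := fun x => rfl
  have hinj : Function.Injective f := by
    rw [← LinearMap.ker_eq_bot, LinearMap.ker_eq_bot']
    intro x hx
    by_contra hx0
    obtain ⟨n, rfl⟩ := hω x hx0
    rw [hf, Prod.mk_eq_zero, ← pow_add] at hx
    have h1 := trace_zero_exp q hq hodd K L hK hL ω hω _ hx.1
    have h2 := trace_zero_exp q hq hodd K L hK hL ω hω _ hx.2
    have h3 : n + m ≡ n + 0 [MOD (q + 1)] := h2.trans h1.symm
    have h4 := Nat.ModEq.add_left_cancel' n h3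
    have := Nat.le_of_dvd hm (Nat.modEq_zero_iff_dvd.mp h4)
    omega
  have hbij : Function.Bijective f := by
    rw [Fintype.bijective_iff_injective_and_card]
    refine ⟨hinj, ?_⟩
    rw [Fintype.card_prod, hK, hL]; ring
  rw [← Set.ncard_prod]
  have : {x : L | Algebra.trace K L x ∈ A ∧ Algebra.trace K L (x * ω ^ m) ∈ B} =
      f ⁻¹' (A ×ˢ B) := by ext x; simp [hf]
  rw [this, Set.ncard_preimage_of_injective_subset_range hinj]
  rw [hbij.2.range_eq]; exact Set.subset_univ _

theorem shift_compl (m : ℕ) (hm : 0 < m) (Kst : Finset ℕ) (hKsub : ∀ k ∈ Kst, k < 2 * m)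
    (hKcard : Kst.card = m) (hKdisj : ∀ k ∈ Kst, (k + m) % (2 * m) ∉ Kst) (r : ℕ) :
    (r + m) % (2 * m) ∈ Kst ↔ r % (2 * m) ∉ Kst := by
  have h0 : 0 < 2 * m := by omega
  have hmm : ∀ r, ((r + m) % (2 * m) + m) % (2 * m) = r % (2 * m) := by
    intro r
    rw [Nat.mod_add_mod, add_assoc, ← two_mul, Nat.add_mod_right]
  constructor
  · intro h
    have := hKdisj _ h
    rwa [hmm] at this
  · intro h
    set I := Kst.image (fun k => (k + m) % (2 * m)) with hI
    have hIc : I.card = m := by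
      rw [hI, Finset.card_image_of_injOn, hKcard]
      intro x hx y hy hxy
      simp only at hxy
      have h1 := hmm x
      rw [hxy, hmm y] at h1
      rw [Nat.mod_eq_of_lt (hKsub x hx), Nat.mod_eq_of_lt (hKsub y hy)] at h1
      exact h1.symm
    have hd : Disjoint Kst I := by
      rw [Finset.disjoint_right]
      intro x hx
      obtain ⟨k, hk, rfl⟩ := Finset.mem_image.mp hx
      exact hKdisj k hk
    have hU : Kst ∪ I = Finset.range (2 * m) := by
      apply Finset.eq_of_subset_of_card_le
      · intro x hx
        rcases Finset.mem_union.mp hx with hx | hx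
        · exact Finset.mem_range.mpr (hKsub x hx)
        · obtain ⟨k, hk, rfl⟩ := Finset.mem_image.mp hx
          exact Finset.mem_range.mpr (Nat.mod_lt _ h0)
      · rw [Finset.card_union_of_disjoint hd, hKcard, hIc, Finset.card_range]; omega
    have : r % (2 * m) ∈ Kst ∪ I := by
      rw [hU]; exact Finset.mem_range.mpr (Nat.mod_lt _ h0)
    rcases Finset.mem_union.mp this with h' | h'
    · exact absurd h' h
    · obtain ⟨k, hk, hkr⟩ := Finset.mem_image.mp h'
      have : (r + m) % (2 * m) = k := by
        rw [← Nat.mod_add_mod, ← hkr, hmm, Nat.mod_eq_of_lt (hKsub k hk)]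
      rwa [this]

theorem eps_parity (p m l t : ℕ) (hodd : Odd p) (hm : 0 < m)
    (hdvd : 2 * m ∣ p ^ (l * t) + 1) (hldvd : 2 * m ∣ p ^ l + 1) :
    (Even ((p ^ l + 1) / (2 * m)) ∧ Odd t) ↔ Even ((p ^ (l * t) + 1) / (2 * m)) := by
  obtain ⟨u, hu⟩ := hldvd
  obtain ⟨v, hv⟩ := hdvd
  have h0 : 0 < 2 * m := by omega
  rw [hu, hv, Nat.mul_div_cancel_left _ h0, Nat.mul_div_cancel_left _ h0]
  rcases Nat.even_or_odd t with ht | ht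
  · have hnt : ¬ Odd t := Nat.not_odd_iff_even.mpr ht
    simp only [hnt, and_false, false_iff]
    intro hve
    obtain ⟨w, rfl⟩ := hve
    obtain ⟨j, rfl⟩ := ht
    have h4 : (p ^ (l * (j + j))) % 4 = 1 := by
      rw [← two_mul, mul_left_comm, mul_comm 2, pow_mul]
      obtain ⟨c, hc⟩ : Odd (p ^ (l * j)) := hodd.pow
      rw [hc]
      ring_nf
      omega
    have : 2 * m * (w + w) = 4 * (m * w) := by ring
    omega
  · simp only [ht, and_true]
    obtain ⟨j, rfl⟩ := ht
    -- p^(lt)+1 = (p^l+1) * odd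
    have hx : Odd (p ^ l) := hodd.pow
    rw [pow_mul] at hv
    generalize p ^ l = x at *
    have key : ∀ j : ℕ, ∃ c, x ^ (2 * j + 1) + 1 = (x + 1) * (2 * c + 1) := by
      intro j
      induction j with
      | zero => exact ⟨0, by simp⟩
      | succ j ih =>
        obtain ⟨c, hc⟩ := ih
        obtain ⟨r, hr⟩ := hx
        refine ⟨c * x ^ 2 + 2 * r ^ 2 + r, ?_⟩
        have e : x ^ (2 * (j + 1) + 1) = x ^ (2 * j + 1) * x ^ 2 := by ring
        rw [e]
        zify at hc hr ⊢
        have hc' : (x : ℤ) ^ (2 * j + 1) = (x + 1) * (2 * c + 1) - 1 := by linarith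
        rw [hc', hr]
        ring
    obtain ⟨c, hc⟩ := key j
    rw [hc, hu, mul_assoc] at hv
    have hv' := Nat.eq_of_mul_eq_mul_left h0 hv
    rw [← hv', Nat.even_mul]
    have : ¬ Even (2 * c + 1) := by simp
    tauto

theorem mem_cyc_iff (q m : ℕ) (hq : 3 ≤ q) (hdvd : 2 * m ∣ q + 1) (L : Type) [Field L] [Fintype L]
    (hL : Fintype.card L = q ^ 2) (ω : L) (hω : IsPrim L ω) (n i : ℕ) :
    ω ^ n ∈ cyc L ω (2 * m) i ↔ n ≡ i [MOD (2 * m)] := by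
  obtain ⟨hω0, hmod⟩ := prim_facts q hq L hL ω hω
  have hd : 2 * m ∣ q ^ 2 - 1 := by
    refine hdvd.trans ⟨q - 1, ?_⟩
    rw [← Nat.sq_sub_sq, one_pow]
  have hpos : 1 ≤ q ^ 2 - 1 := by
    have : 9 ≤ q ^ 2 := by nlinarith
    omega
  constructor
  · rintro ⟨k, hk⟩
    rw [← pow_mul, ← pow_add, hmod] at hk
    have := hk.of_dvd hd
    refine this.trans ?_
    simp [Nat.ModEq]
  · intro h
    have h1 : i ≡ n + i * (q ^ 2 - 1) [MOD (2 * m)] := by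
      refine h.symm.trans ?_
      have : i * (q ^ 2 - 1) ≡ 0 [MOD (2 * m)] :=
        Nat.modEq_zero_iff_dvd.mpr (hd.mul_left i)
      simpa using (Nat.ModEq.add_left n this).symm
    have hle : i ≤ n + i * (q ^ 2 - 1) := by nlinarith
    obtain ⟨k, hk⟩ := (Nat.modEq_iff_dvd' hle).mp h1
    refine ⟨k, ?_⟩
    rw [← pow_mul, ← pow_add, ← hk, Nat.add_sub_cancel' hle, hmod]
    simp [Nat.ModEq]

theorem zero_notMem_cyc (L : Type) [Field L] (ω : L) (hω0 : ω ≠ 0) (N i : ℕ) :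
    (0 : L) ∉ cyc L ω N i := by
  rintro ⟨k, hk⟩
  exact (mul_ne_zero (pow_ne_zero _ hω0) (pow_ne_zero _ (pow_ne_zero _ hω0))) hk.symm

open Classical in
theorem char_D (p q m : ℕ) (hp : p.Prime) (hq : 3 ≤ q) (hodd : Odd q) (hm : 0 < m)
    (hdvd : 2 * m ∣ q + 1) (K L : Type) [Field K] [Fintype K] [Field L] [Fintype L]
    [Algebra K L] [CharP L p]
    (hK : Fintype.card K = q) (hL : Fintype.card L = q ^ 2) (ω : L) (hω : IsPrim L ω)
    (D : Finset L) (h0 : (0 : L) ∉ D) (P : ℕ → Prop) (hP : ∀ n, ω ^ n ∈ D ↔ P (n % (2 * m)))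
    (a : L) (ha : a ≠ 0) (f : ℕ) (hf : a⁻¹ = ω ^ f) :
    ((q : ℂ) - 1) * ∑ x ∈ D, psiL p L (a * x) =
      (q : ℂ) * (if P ((f + (q + 1) / 2) % (2 * m)) then (q : ℂ) - 1 else 0) - D.card := by
  obtain ⟨hω0, hmod⟩ := prim_facts q hq L hL ω hω
  have hinv : ∀ y : K, y ≠ 0 → ∀ x ∈ D, x * algebraMap K L y ∈ D := by
    intro y hy x hx
    have hx0 : x ≠ 0 := fun h => h0 (h ▸ hx)
    obtain ⟨n, rfl⟩ := hω x hx0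
    have hy1 : algebraMap K L y ≠ 0 := by simpa using hy
    obtain ⟨k, hk⟩ := hω _ hy1
    have h1 : (algebraMap K L y) ^ (q - 1) = 1 := by
      rw [← map_pow, ← hK, FiniteField.pow_card_sub_one_eq_one y hy, map_one]
    rw [hk, ← pow_mul, ← pow_zero ω, hmod] at h1
    have h2 : (q + 1) * (q - 1) ∣ k * (q - 1) := by
      rw [← Nat.sq_sub_sq, one_pow]; exact Nat.modEq_zero_iff_dvd.mp h1
    have h3 : 2 * m ∣ k := hdvd.trans (Nat.dvd_of_mul_dvd_mul_right (by omega) h2)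
    rw [hk, ← pow_add, hP]
    rw [hP] at hx
    obtain ⟨j, rfl⟩ := h3
    simpa using hx
  have main := psi_sum_D p hp K L a D hinv
  rw [hK] at main
  rw [main]
  have hkey : ∀ x : L, x ≠ 0 → Algebra.trace K L (a * x) = 0 →
      (x ∈ D ↔ P ((f + (q + 1) / 2) % (2 * m))) := by
    intro x hx htr
    obtain ⟨j, hj⟩ := hω (a * x) (mul_ne_zero ha hx)
    rw [hj] at htr
    have h1 := (trace_zero_exp q hq hodd K L hK hL ω hω j htr).of_dvd hdvd
    have hxe : x = ω ^ (f + j) := by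
      rw [pow_add, ← hf, ← hj, inv_mul_cancel_left₀ ha]
    rw [hxe, hP, (Nat.ModEq.add_left f h1 : (f + j) % (2 * m) = _)]
  have hcard : ((Finset.univ : Finset L).filter
      (fun x => x ≠ 0 ∧ Algebra.trace K L (a * x) = 0)).card = q - 1 := by
    have hmq : m < q + 1 := by
      have := Nat.le_of_dvd (by omega) hdvd
      omega
    have h1 := trace_pair_card q m hq hodd hm hmq K L hK hL ω hω {0} Set.univ
    rw [Set.ncard_singleton, Set.ncard_univ, Nat.card_eq_fintype_card, hK, one_mul] at h1
    have h2 : {x : L | Algebra.trace K L x ∈ ({0} : Set K) ∧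
        Algebra.trace K L (x * ω ^ m) ∈ (Set.univ : Set K)} =
        (((Finset.univ : Finset L).filter (fun x => Algebra.trace K L x = 0) : Finset L) : Set L) := by
      ext x; simp
    rw [h2, Set.ncard_coe_finset] at h1
    have h3 : (((Finset.univ : Finset L).filter (fun x => Algebra.trace K L x = 0)).erase 0).card
        = q - 1 := by
      rw [Finset.card_erase_of_mem (by simp), h1]
    rw [← h3]
    refine Finset.card_bij' (fun x _ => a * x) (fun x _ => a⁻¹ * x) ?_ ?_ ?_ ?_
    · intro x hx; simp at hx; simp [hx, ha]
    · intro x hx; simp at hx; simp [hx, ha]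
    · intro x hx; simp [ha]
    · intro x hx; simp [ha]
  split_ifs with hc
  · have : D.filter (fun x => Algebra.trace K L (a * x) = 0) = (Finset.univ : Finset L).filter
      (fun x => x ≠ 0 ∧ Algebra.trace K L (a * x) = 0) := by
      ext x
      simp only [Finset.mem_filter, Finset.mem_univ, true_and]
      constructor
      · rintro ⟨h1, h2⟩; exact ⟨fun h => h0 (h ▸ h1), h2⟩
      · rintro ⟨h1, h2⟩; exact ⟨(hkey x h1 h2).mpr hc, h2⟩
    rw [this, hcard, Nat.cast_sub (by omega), Nat.cast_one]
  · have : D.filter (fun x => Algebra.trace K L (a * x) = 0) = ∅ := by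
      ext x
      simp only [Finset.mem_filter, Finset.notMem_empty, iff_false]
      rintro ⟨h1, h2⟩; exact hc ((hkey x (fun h => h0 (h ▸ h1)) h2).mp h1)
    rw [this]; simp

theorem psiSum_E (p : ℕ) (L : Type) [Field L] [Fintype L] [CharP L p] (a : L)
    (D₀ D₁ : Finset L) (A₀ A₁ : Set L) (h0 : (0 : L) ∉ D₀) (h1 : (0 : L) ∉ D₁)
    (hd : Disjoint D₀ D₁) :
    psiSum p L a 0 ({w | ∃ x ∈ (D₀ : Set L), ∃ y ∈ A₀, w = (x, x * y)} ∪
      {w | ∃ x ∈ (D₁ : Set L), ∃ y ∈ A₁, w = (x, x * y)}) =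
    (A₀.ncard : ℂ) * ∑ x ∈ D₀, psiL p L (a * x) + (A₁.ncard : ℂ) * ∑ x ∈ D₁, psiL p L (a * x) := by
  classical
  have one : ∀ (D : Finset L) (A : Set L), (0 : L) ∉ D →
      ∑ᶠ z ∈ {w : L × L | ∃ x ∈ (D : Set L), ∃ y ∈ A, w = (x, x * y)},
        psiL p L (a * z.1 + 0 * z.2) = (A.ncard : ℂ) * ∑ x ∈ D, psiL p L (a * x) := by
    intro D A hD
    have himg : {w : L × L | ∃ x ∈ (D : Set L), ∃ y ∈ A, w = (x, x * y)} =
        (fun z : L × L => (z.1, z.1 * z.2)) '' ((D ×ˢ A.toFinset : Finset (L × L)) : Set (L × L)) := by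
      ext w
      simp only [Set.mem_setOf_eq, Set.mem_image, Finset.coe_product, Set.mem_prod, Prod.exists]
      constructor
      · rintro ⟨x, hx, y, hy, rfl⟩; exact ⟨x, y, ⟨hx, by simpa using hy⟩, rfl⟩
      · rintro ⟨x, y, ⟨hx, hy⟩, rfl⟩; exact ⟨x, hx, y, by simpa using hy, rfl⟩
    rw [himg, finsum_mem_image, finsum_mem_coe_finset, Finset.sum_product]
    · simp [Set.ncard_eq_toFinset_card', Finset.mul_sum]
    · rintro ⟨x, y⟩ hx ⟨x', y'⟩ hx' h
      simp only [Prod.mk.injEq] at h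
      obtain ⟨rfl, h⟩ := h
      have : x ≠ 0 := by
        rintro rfl
        simp at hx
        exact hD hx.1
      simp [mul_left_cancel₀ this h]
  unfold psiSum
  rw [finsum_mem_union _ (Set.toFinite _) (Set.toFinite _), one _ _ h0, one _ _ h1]
  rw [Set.disjoint_left]
  rintro w ⟨x, hx, y, hy, rfl⟩ ⟨x', hx', y', hy', h⟩
  simp only [Prod.mk.injEq] at h
  obtain ⟨rfl, -⟩ := h
  exact absurd hx' ((Finset.disjoint_left.mp hd) hx)

/-- Lemma 3.4: for `b = 0`, `a ≠ 0`, `ψ_{a,0}(E₁)` is `(q²−1)/4` if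
`a⁻¹ ∈ D_ε` and `(−3q²−1)/4` otherwise. -/
theorem semiprimitive_E1_char_b_zero
    (p s q m l t : ℕ) (hp : p.Prime) (hpodd : p ≠ 2) (hs : 0 < s) (hq : q = p ^ s)
    (hm : 0 < m) (hdvd : 2 * m ∣ q + 1)
    (hl : 0 < l) (hldvd : 2 * m ∣ p ^ l + 1)
    (hlmin : ∀ l', 0 < l' → 2 * m ∣ p ^ l' + 1 → l ≤ l')
    (ht : s = l * t)
    (K L : Type) [Field K] [Fintype K] [Field L] [Fintype L] [Algebra K L] [CharP L p]
    (hK : Fintype.card K = q) (hL : Fintype.card L = q ^ 2)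
    (ω : L) (hω : IsPrim L ω)
    (Kst : Finset ℕ) (hKsub : ∀ k ∈ Kst, k < 2 * m) (hKcard : Kst.card = m)
    (hKdisj : ∀ k ∈ Kst, (k + m) % (2 * m) ∉ Kst)
    (D₀ D₁ : Set L)
    (hD₀ : D₀ = ⋃ i ∈ Kst, cyc L ω (2 * m) i)
    (hD₁ : D₁ = ⋃ i ∈ Kst, cyc L ω (2 * m) (i + m))
    (T₀ T₁ : Set K)
    (S₀ S₁ : Set L)
    (hS₀ : S₀ = {x : L | Algebra.trace K L x ∈ T₀})
    (hS₁ : S₁ = {x : L | Algebra.trace K L (x * ω ^ m) ∈ T₁})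
    (ε : ℕ) (hε : ε = if Even ((p ^ l + 1) / (2 * m)) ∧ Odd t then 1 else 0)
    (Dε : Set L) (hDε : Dε = if ε = 0 then D₀ else D₁)
    (A₀ A₁ : Set L) (hA₀ : A₀ = S₀ \ S₁) (hA₁ : A₁ = S₁ \ S₀)
    (hT₀ : T₀.ncard = (q - 1) / 2) (hT₁ : T₁.ncard = (q + 1) / 2)
    (E₁ : Set (L × L))
    (hE₁ : E₁ = {w | ∃ x ∈ D₀, ∃ y ∈ A₀, w = (x, x * y)} ∪
      {w | ∃ x ∈ D₁, ∃ y ∈ A₁, w = (x, x * y)})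
    : ∀ a : L, a ≠ 0 →
      (a⁻¹ ∈ Dε → psiSum p L a 0 E₁ = ((q : ℂ) ^ 2 - 1) / 4) ∧
      (a⁻¹ ∉ Dε → psiSum p L a 0 E₁ = (-3 * (q : ℂ) ^ 2 - 1) / 4) := by
  classical
  intro a ha
  have hpo : Odd p := hp.odd_of_ne_two hpodd
  have hodd : Odd q := hq ▸ hpo.pow
  have hp3 : 3 ≤ p := by
    have := hp.two_le
    omega
  have hq3 : 3 ≤ q := by
    rw [hq]; exact hp3.trans (Nat.le_self_pow hs.ne' p)
  obtain ⟨hω0, hmod⟩ := prim_facts q hq3 L hL ω hω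
  have hmq : m < q + 1 := by
    have := Nat.le_of_dvd (by omega) hdvd
    omega
  have hcomp := shift_compl m hm Kst hKsub hKcard hKdisj
  have h2m : 0 < 2 * m := by omega
  -- membership
  have mem0 : ∀ n, ω ^ n ∈ D₀ ↔ n % (2 * m) ∈ Kst := by
    intro n
    simp only [hD₀, Set.mem_iUnion, mem_cyc_iff q m hq3 hdvd L hL ω hω, exists_prop]
    constructor
    · rintro ⟨i, hi, h⟩
      have h' : n % (2 * m) = i % (2 * m) := h
      rwa [h', Nat.mod_eq_of_lt (hKsub i hi)]
    · intro h
      exact ⟨_, h, (Nat.mod_modEq n _).symm⟩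
  have mem1 : ∀ n, ω ^ n ∈ D₁ ↔ n % (2 * m) ∉ Kst := by
    intro n
    rw [← hcomp]
    simp only [hD₁, Set.mem_iUnion, mem_cyc_iff q m hq3 hdvd L hL ω hω, exists_prop]
    constructor
    · rintro ⟨i, hi, h⟩
      have h' : (n + m) % (2 * m) = (i + m + m) % (2 * m) := Nat.ModEq.add_right m h
      rw [h', add_assoc, ← two_mul, Nat.add_mod_right, Nat.mod_eq_of_lt (hKsub i hi)]
      exact hi
    · intro h
      refine ⟨_, h, ?_⟩
      have : (n + m) % (2 * m) + m ≡ n + m + m [MOD (2 * m)] :=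
        Nat.ModEq.add_right m (Nat.mod_modEq _ _)
      refine Nat.ModEq.trans ?_ this.symm
      rw [add_assoc, ← two_mul]
      simp [Nat.ModEq]
  have z0 : (0 : L) ∉ D₀ := by
    simp [hD₀, zero_notMem_cyc L ω hω0]
  have z1 : (0 : L) ∉ D₁ := by
    simp [hD₁, zero_notMem_cyc L ω hω0]
  obtain ⟨F₀, hF₀⟩ : ∃ F : Finset L, (F : Set L) = D₀ := ⟨D₀.toFinset, by simp⟩
  obtain ⟨F₁, hF₁⟩ : ∃ F : Finset L, (F : Set L) = D₁ := ⟨D₁.toFinset, by simp⟩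
  have fz0 : (0 : L) ∉ F₀ := by rwa [← Finset.mem_coe, hF₀]
  have fz1 : (0 : L) ∉ F₁ := by rwa [← Finset.mem_coe, hF₁]
  have fm0 : ∀ n, ω ^ n ∈ F₀ ↔ n % (2 * m) ∈ Kst := by
    intro n; rw [← mem0, ← Finset.mem_coe, hF₀]
  have fm1 : ∀ n, ω ^ n ∈ F₁ ↔ n % (2 * m) ∉ Kst := by
    intro n; rw [← mem1, ← Finset.mem_coe, hF₁]
  have hdisj : Disjoint F₀ F₁ := by
    rw [Finset.disjoint_left]
    intro x h0 h1
    obtain ⟨n, rfl⟩ := hω x (fun h => fz0 (h ▸ h0))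
    exact (fm1 n).mp h1 ((fm0 n).mp h0)
  have hunion : F₀ ∪ F₁ = Finset.univ.erase 0 := by
    ext x
    simp only [Finset.mem_union, Finset.mem_erase, Finset.mem_univ, and_true]
    constructor
    · rintro (h | h) rfl
      · exact fz0 h
      · exact fz1 h
    · intro hx
      obtain ⟨n, rfl⟩ := hω x hx
      rw [fm0, fm1]; tauto
  have hsum : F₀.card + F₁.card = q ^ 2 - 1 := by
    rw [← Finset.card_union_of_disjoint hdisj, hunion,
      Finset.card_erase_of_mem (Finset.mem_univ _), Finset.card_univ, hL]
  have hinj : Function.Injective (fun x : L => x * ω ^ m) :=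
    mul_left_injective₀ (pow_ne_zero _ hω0)
  have hle1 : F₀.card ≤ F₁.card := by
    apply Finset.card_le_card_of_injOn (fun x => x * ω ^ m) _ hinj.injOn
    intro x hx
    obtain ⟨n, rfl⟩ := hω x (fun h => fz0 (h ▸ hx))
    have hx' := (fm0 n).mp hx
    show ω ^ n * ω ^ m ∈ F₁
    rw [← pow_add, fm1, hcomp]
    tauto
  have hle2 : F₁.card ≤ F₀.card := by
    apply Finset.card_le_card_of_injOn (fun x => x * ω ^ m) _ hinj.injOn
    intro x hx
    obtain ⟨n, rfl⟩ := hω x (fun h => fz1 (h ▸ hx))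
    have hx' := (fm1 n).mp hx
    show ω ^ n * ω ^ m ∈ F₀
    rwa [← pow_add, fm0, hcomp]
  obtain ⟨r, hr⟩ := id hodd
  have hr1 : 1 ≤ r := by omega
  have hQ : q ^ 2 - 1 = 2 * (2 * r * (r + 1)) := by
    rw [hr]; zify [show 1 ≤ (2 * r + 1) ^ 2 from Nat.one_le_pow _ _ (by omega)]; ring
  have hc0 : F₀.card = 2 * r * (r + 1) := by omega
  have hc1 : F₁.card = 2 * r * (r + 1) := by omega
  -- sizes of A₀, A₁
  have nT0 : T₀.ncard = r := by omega
  have nT1 : T₁.ncard = r + 1 := by omega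
  have hKn : Nat.card K = 2 * r + 1 := by rw [Nat.card_eq_fintype_card, hK, hr]
  have nT0c : T₀ᶜ.ncard = r + 1 := by
    have := Set.ncard_add_ncard_compl T₀
    omega
  have nT1c : T₁ᶜ.ncard = r := by
    have := Set.ncard_add_ncard_compl T₁
    omega
  have nA0 : A₀.ncard = r * r := by
    have h := trace_pair_card q m hq3 hodd hm hmq K L hK hL ω hω T₀ T₁ᶜ
    rw [nT0, nT1c] at h
    rw [← h, hA₀, hS₀, hS₁]
    rfl
  have nA1 : A₁.ncard = (r + 1) * (r + 1) := by
    have h := trace_pair_card q m hq3 hodd hm hmq K L hK hL ω hω T₀ᶜ T₁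
    rw [nT0c, nT1] at h
    rw [← h, hA₁, hS₀, hS₁]
    congr 1
    ext x
    exact and_comm
  obtain ⟨f, hf⟩ := hω a⁻¹ (inv_ne_zero ha)
  have hX0 := char_D p q m hp hq3 hodd hm hdvd K L hK hL ω hω F₀ fz0 (fun n => n ∈ Kst) fm0 a ha f hf
  have hX1 := char_D p q m hp hq3 hodd hm hdvd K L hK hL ω hω F₁ fz1 (fun n => n ∉ Kst) fm1 a ha f hf
  have hE := psiSum_E p L a F₀ F₁ A₀ A₁ fz0 fz1 hdisj
  rw [hF₀, hF₁, ← hE₁, nA0, nA1] at hE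
  have hqc : (q : ℂ) = 2 * r + 1 := by rw [hr]; push_cast; ring
  have hrc : (r : ℂ) ≠ 0 := by exact_mod_cast (by omega : r ≠ 0)
  rw [hc0] at hX0
  rw [hc1] at hX1
  set X0 := ∑ x ∈ F₀, psiL p L (a * x)
  set X1 := ∑ x ∈ F₁, psiL p L (a * x)
  -- the value
  have hval : ((f + (q + 1) / 2) % (2 * m) ∉ Kst → psiSum p L a 0 E₁ = ((q : ℂ) ^ 2 - 1) / 4) ∧
      ((f + (q + 1) / 2) % (2 * m) ∈ Kst → psiSum p L a 0 E₁ = (-3 * (q : ℂ) ^ 2 - 1) / 4) := by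
    have h2r : (2 * r : ℂ) ≠ 0 := mul_ne_zero two_ne_zero hrc
    constructor
    · intro hc
      simp only [hc, if_false, not_false_eq_true, if_true] at hX0 hX1
      rw [hqc] at hX0 hX1
      push_cast at hX0 hX1 hE
      have e0 : X0 = -(r + 1) := mul_left_cancel₀ h2r (by linear_combination hX0)
      have e1 : X1 = r := mul_left_cancel₀ h2r (by linear_combination hX1)
      rw [hE, e0, e1, hqc]; ring
    · intro hc
      simp only [hc, if_false, not_true_eq_false, if_true] at hX0 hX1
      rw [hqc] at hX0 hX1
      push_cast at hX0 hX1 hE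
      have e0 : X0 = r := mul_left_cancel₀ h2r (by linear_combination hX0)
      have e1 : X1 = -(r + 1) := mul_left_cancel₀ h2r (by linear_combination hX1)
      rw [hE, e0, e1, hqc]; ring
  have hpar : (Even ((p ^ l + 1) / (2 * m)) ∧ Odd t) ↔ Even ((q + 1) / (2 * m)) := by
    have h := hdvd
    rw [hq, ht] at h
    rw [hq, ht]
    exact eps_parity p m l t hpo hm h hldvd
  have hDiff : a⁻¹ ∈ Dε ↔ (f + (q + 1) / 2) % (2 * m) ∉ Kst := by
    obtain ⟨v, hv⟩ := hdvd
    have hv2 : (q + 1) / 2 = m * v := by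
      rw [hv, mul_assoc, Nat.mul_div_cancel_left _ two_pos]
    rw [hv, Nat.mul_div_cancel_left _ h2m] at hpar
    rw [hv2, hf]
    rcases Nat.even_or_odd v with hev | hov
    · have e1 : ε = 1 := by rw [hε, if_pos (hpar.mpr hev)]
      rw [hDε, e1, if_neg one_ne_zero, mem1]
      obtain ⟨w, rfl⟩ := hev
      rw [show m * (w + w) = 2 * m * w by ring, Nat.add_mul_mod_self_left]
    · have e0 : ε = 0 := by
        rw [hε, if_neg]
        rw [hpar]
        exact Nat.not_even_iff_odd.mpr hov
      rw [hDε, if_pos e0, mem0]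
      obtain ⟨w, rfl⟩ := hov
      rw [show f + m * (2 * w + 1) = f + m + 2 * m * w by ring, Nat.add_mul_mod_self_left, hcomp]
      tauto
  rw [hDiff]
  exact ⟨hval.1, fun h => hval.2 (not_not.mp h)⟩

end
end

section
/- In the semi-primitive cyclotomic setting (with T_0, T_1 arbitrary subsets of F_q), let a, b ∈ F_{q²} with b ≠ 0, and define U_1 = Σ_{x ∈ D_0} Σ_{y ∈ S_0} ζ_p^{Tr_{q²/p}(x(a+by))}. Then U_1 = −q|T_0| + q² if −ab^{−1} ∈ S_0 and b^{−1} ∈ D_0; U_1 = −q|T_0| if −ab^{−1} ∉ S_0 and b^{−1} ∈ D_0; and U_1 = 0 if b^{−1} ∈ D_1. -/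
noncomputable section

lemma exists_char (p : ℕ) (hp : p.Prime) (K L : Type) [Field K] [Fintype K] [Field L] [Fintype L]
    [Algebra K L] [CharP L p] :
    ∃ χ : AddChar K ℂ, χ.IsPrimitive ∧ ∀ x : L, psiL p L x = χ (Algebra.trace K L x) := by
  have : Fact p.Prime := ⟨hp⟩
  have : CharP K p := (Algebra.charP_iff K L p).mpr inferInstance
  let : Algebra (ZMod p) L := ZMod.algebra L p
  let : Algebra (ZMod p) K := ZMod.algebra K p
  have : IsScalarTower (ZMod p) K L := IsScalarTower.of_algebraMap_eq' (Subsingleton.elim _ _)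
  have hz : IsPrimitiveRoot (zetaP p) p := Complex.isPrimitiveRoot_exp p hp.ne_zero
  have hprim := AddChar.zmodChar_primitive_of_primitive_root p hz
  refine ⟨(AddChar.zmodChar p hz.pow_eq_one).compAddMonoidHom
    (Algebra.trace (ZMod p) K).toAddMonoidHom, ?_, ?_⟩
  · apply AddChar.IsPrimitive.of_ne_one
    rw [AddChar.ne_one_iff]
    obtain ⟨a, ha⟩ := Algebra.trace_surjective (ZMod p) K 1
    refine ⟨a, ?_⟩
    have h1 : AddChar.zmodChar p hz.pow_eq_one 1 ≠ 1 := by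
      rw [← AddChar.zmod_char_ne_one_iff]
      have := hprim (one_ne_zero (α := ZMod p))
      simpa using this
    simpa [ha] using h1
  · intro x
    simp only [AddChar.compAddMonoidHom_apply, LinearMap.toAddMonoidHom_coe, Algebra.trace_trace,
      AddChar.zmodChar_apply]
    rfl

lemma mem_base_of_trace {K L : Type} [Field K] [Fintype K] [Field L] [Fintype L]
    [Algebra K L] (χ : AddChar K ℂ) (hχ : χ.IsPrimitive) (c : L)
    (h : ∀ z : L, Algebra.trace K L z = 0 → χ (Algebra.trace K L (c * z)) = 1) :
    ∃ k : K, algebraMap K L k = c := by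
  classical
  have h2 : ∀ z : L, Algebra.trace K L z = 0 → Algebra.trace K L (c * z) = 0 := by
    intro z hz
    by_contra hne
    apply hχ hne
    ext k
    have := h (k • z) (by simp [hz])
    rw [mul_smul_comm, map_smul, smul_eq_mul, mul_comm] at this
    simpa [AddChar.mulShift_apply] using this
  have h3 : (Algebra.trace K L).comp (LinearMap.mulLeft K c) ∈
      Submodule.span K (Set.range fun _ : Unit => Algebra.trace K L) := by
    apply mem_span_of_iInf_ker_le_ker
    intro z hz
    simp only [ciInf_unique, LinearMap.mem_ker] at hz
    simpa using h2 z hz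
  rw [Set.range_const, Submodule.mem_span_singleton] at h3
  obtain ⟨k, hk⟩ := h3
  refine ⟨k, ?_⟩
  have h4 := (traceForm_nondegenerate K L).1 (algebraMap K L k - c) (by
    intro y
    have := congrArg (fun f => f y) hk
    simp only [LinearMap.smul_apply, LinearMap.comp_apply, LinearMap.mulLeft_apply] at this
    rw [Algebra.traceForm_apply, sub_mul, map_sub, ← this, ← Algebra.smul_def, map_smul, sub_self])
  exact sub_eq_zero.mp h4

lemma sum_S_eq_zero {K L : Type} [Field K] [Fintype K] [Field L] [Fintype L]
    [Algebra K L] (χ : AddChar K ℂ) (hχ : χ.IsPrimitive) (c d : L)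
    (hc : ¬ ∃ k : K, algebraMap K L k = c) (S : Finset L)
    (hS : ∀ y z : L, Algebra.trace K L z = 0 → (z + y ∈ S ↔ y ∈ S)) :
    ∑ y ∈ S, χ (Algebra.trace K L (d + c * y)) = 0 := by
  have : ∃ z : L, Algebra.trace K L z = 0 ∧ χ (Algebra.trace K L (c * z)) ≠ 1 := by
    by_contra! hh
    exact hc (mem_base_of_trace χ hχ c hh)
  obtain ⟨z, hz, hz1⟩ := this
  have key : ∑ y ∈ S, χ (Algebra.trace K L (d + c * y)) =
      χ (Algebra.trace K L (c * z)) * ∑ y ∈ S, χ (Algebra.trace K L (d + c * y)) := by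
    rw [Finset.mul_sum]
    symm
    apply Finset.sum_equiv (Equiv.addLeft z)
    · intro y
      simp [hS y z hz]
    · intro y _
      rw [← AddChar.map_add_eq_mul, ← map_add]
      congr 2
      simp only [Equiv.coe_addLeft]
      ring
  have : (1 - χ (Algebra.trace K L (c * z))) *
      ∑ y ∈ S, χ (Algebra.trace K L (d + c * y)) = 0 := by
    linear_combination key
  rcases mul_eq_zero.mp this with h | h
  · exact absurd (sub_eq_zero.mp h).symm hz1
  · exact h

lemma card_trace_fiber {K L : Type} [Field K] [Fintype K] [Field L] [Fintype L]
    [Algebra K L] [DecidableEq K] (q : ℕ) (hq0 : 0 < q)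
    (hK : Fintype.card K = q) (hL : Fintype.card L = q ^ 2) (k : K) :
    (Finset.univ.filter fun y : L => Algebra.trace K L y = k).card = q := by
  have hsurj := Algebra.trace_surjective K L
  have hall : ∀ k', (Finset.univ.filter fun y : L => Algebra.trace K L y = k').card =
      (Finset.univ.filter fun y : L => Algebra.trace K L y = k).card := fun k' =>
    AddMonoidHom.card_fiber_eq_of_mem_range (Algebra.trace K L) (hsurj k') (hsurj k)
  have := Finset.card_eq_sum_card_fiberwise (s := (Finset.univ : Finset L))
    (t := (Finset.univ : Finset K)) (f := fun y => Algebra.trace K L y) (by simp)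
  simp only [hall, Finset.sum_const, Finset.card_univ, hK, hL, smul_eq_mul] at this
  rw [pow_two] at this
  exact (Nat.eq_of_mul_eq_mul_left hq0 this).symm

lemma prim_ne_zero {L : Type} [Field L] [Fintype L] (ω : L) (hω : IsPrim L ω)
    (h3 : 2 < Fintype.card L) : ω ≠ 0 := by
  classical
  rintro rfl
  have : (Finset.univ : Finset L) ⊆ {0, 1} := by
    intro x _
    by_cases hx : x = 0
    · simp [hx]
    · obtain ⟨n, hn⟩ := hω x hx
      rcases Nat.eq_zero_or_pos n with h0 | h0
      · simp [hn, h0]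
      · rw [zero_pow h0.ne'] at hn
        exact absurd hn hx
  have h := Finset.card_le_card this
  have h2 := Finset.card_le_two (a := (0 : L)) (b := 1)
  rw [Finset.card_univ] at h
  omega

lemma prim_pow_eq_one {L : Type} [Field L] [Fintype L] (ω : L) (hω : IsPrim L ω)
    (h0 : ω ≠ 0) (n : ℕ) (h : ω ^ n = 1) : Fintype.card L - 1 ∣ n := by
  classical
  have h1 : orderOf (Units.mk0 ω h0) = Nat.card Lˣ := by
    apply orderOf_eq_card_of_forall_mem_zpowers
    intro x
    obtain ⟨n, hn⟩ := hω x x.ne_zero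
    exact ⟨n, by ext; simp [hn]⟩
  rw [Nat.card_eq_fintype_card, Fintype.card_units] at h1
  rw [← h1]
  apply orderOf_dvd_of_pow_eq_one
  ext
  simpa using h

/-- exponents are well defined modulo any divisor of the group order, up to the base field -/
lemma exp_mod {K L : Type} [Field K] [Fintype K] [Field L] [Fintype L]
    [Algebra K L] (q N : ℕ) (hq : 2 ≤ q) (hN : N ∣ q + 1)
    (hK : Fintype.card K = q) (hL : Fintype.card L = q ^ 2)
    (ω : L) (hω : IsPrim L ω) (c : K) (hc : c ≠ 0) (n n' : ℕ)
    (h : algebraMap K L c * ω ^ n = ω ^ n') : n ≡ n' [MOD N] := by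
  have h0 : ω ≠ 0 := prim_ne_zero ω hω (by rw [hL]; nlinarith)
  have hcq : c ^ (q - 1) = 1 := by rw [← hK]; exact FiniteField.pow_card_sub_one_eq_one c hc
  have h1 : ω ^ (n * (q - 1)) = ω ^ (n' * (q - 1)) := by
    rw [pow_mul, pow_mul, ← h, mul_pow, ← map_pow, hcq, map_one, one_mul]
  have key : ∀ u v : ℕ, u ≤ v → ω ^ (u * (q - 1)) = ω ^ (v * (q - 1)) → u ≡ v [MOD N] := by
    intro u v huv huv1
    obtain ⟨d, rfl⟩ := Nat.exists_eq_add_of_le huv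
    have h2 : ω ^ (d * (q - 1)) = 1 := by
      rw [add_mul, pow_add] at huv1
      exact (mul_eq_left₀ (pow_ne_zero _ h0)).mp huv1.symm
    have h3 := prim_pow_eq_one ω hω h0 _ h2
    have h4 : q ^ 2 - 1 = (q + 1) * (q - 1) := by
      simpa using Nat.sq_sub_sq q 1
    rw [hL, h4] at h3
    have h5 : q + 1 ∣ d := Nat.dvd_of_mul_dvd_mul_right (by omega) h3
    have h6 : N ∣ d := hN.trans h5
    exact (Nat.modEq_iff_dvd' huv).mpr (by simpa using h6)
  rcases le_total n n' with hle | hle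
  · exact key _ _ hle h1
  · exact (key _ _ hle h1.symm).symm

lemma mem_D_iff {L : Type} [Field L] (ω : L) (m : ℕ) (Kst : Finset ℕ)
    (hKsub : ∀ k ∈ Kst, k < 2 * m) (x : L) :
    x ∈ (⋃ i ∈ Kst, cyc L ω (2 * m) i) ↔ ∃ n, x = ω ^ n ∧ n % (2 * m) ∈ Kst := by
  simp only [Set.mem_iUnion, cyc, Set.mem_ofPred_eq, exists_prop]
  constructor
  · rintro ⟨i, hi, k, rfl⟩
    refine ⟨i + 2 * m * k, by rw [pow_add, pow_mul ω (2 * m) k], ?_⟩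
    rwa [Nat.add_mul_mod_self_left, Nat.mod_eq_of_lt (hKsub i hi)]
  · rintro ⟨n, rfl, hn⟩
    exact ⟨_, hn, n / (2 * m), by rw [← pow_mul, ← pow_add, Nat.mod_add_div]⟩


/-- Lemma 3.5: evaluation of `U₁`. -/
theorem semiprimitive_U1
    (p s q m l t : ℕ) (hp : p.Prime) (hpodd : p ≠ 2) (hs : 0 < s) (hq : q = p ^ s)
    (hm : 0 < m) (hdvd : 2 * m ∣ q + 1)
    (hl : 0 < l) (hldvd : 2 * m ∣ p ^ l + 1)
    (hlmin : ∀ l', 0 < l' → 2 * m ∣ p ^ l' + 1 → l ≤ l')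
    (ht : s = l * t)
    (K L : Type) [Field K] [Fintype K] [Field L] [Fintype L] [Algebra K L] [CharP L p]
    (hK : Fintype.card K = q) (hL : Fintype.card L = q ^ 2)
    (ω : L) (hω : IsPrim L ω)
    (Kst : Finset ℕ) (hKsub : ∀ k ∈ Kst, k < 2 * m) (hKcard : Kst.card = m)
    (hKdisj : ∀ k ∈ Kst, (k + m) % (2 * m) ∉ Kst)
    (D₀ D₁ : Set L)
    (hD₀ : D₀ = ⋃ i ∈ Kst, cyc L ω (2 * m) i)
    (hD₁ : D₁ = ⋃ i ∈ Kst, cyc L ω (2 * m) (i + m))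
    (T₀ T₁ : Set K)
    (S₀ S₁ : Set L)
    (hS₀ : S₀ = {x : L | Algebra.trace K L x ∈ T₀})
    (hS₁ : S₁ = {x : L | Algebra.trace K L (x * ω ^ m) ∈ T₁})
    (a b : L) (hb : b ≠ 0)
    (U₁ : ℂ) (hU₁ : U₁ = ∑ᶠ x ∈ D₀, ∑ᶠ y ∈ S₀, psiL p L (x * (a + b * y)))
    : (-a * b⁻¹ ∈ S₀ ∧ b⁻¹ ∈ D₀ → U₁ = -(q : ℂ) * T₀.ncard + (q : ℂ) ^ 2) ∧
      (-a * b⁻¹ ∉ S₀ ∧ b⁻¹ ∈ D₀ → U₁ = -(q : ℂ) * T₀.ncard) ∧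
      (b⁻¹ ∈ D₁ → U₁ = 0) := by
  classical
  have hq2 : 2 ≤ q := by
    rw [hq]
    exact hp.two_le.trans (Nat.le_self_pow hs.ne' p)
  obtain ⟨χ, hχ, hψ⟩ := exists_char p hp K L
  have hω0 : ω ≠ 0 := prim_ne_zero ω hω (by rw [hL]; nlinarith)
  have hmemD : ∀ x, x ∈ D₀ ↔ ∃ n, x = ω ^ n ∧ n % (2 * m) ∈ Kst := by
    intro x
    rw [hD₀]
    exact mem_D_iff ω m Kst hKsub x
  have h0D : (0 : L) ∉ D₀ := by
    rw [hmemD]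
    rintro ⟨n, hn, -⟩
    exact pow_ne_zero n hω0 hn.symm
  set S : Finset L := Finset.univ.filter fun y => y ∈ S₀ with hSdef
  have hmemS : ∀ y, y ∈ S ↔ Algebra.trace K L y ∈ T₀ := by
    intro y
    simp [hSdef, hS₀]
  have hSinv : ∀ y z : L, Algebra.trace K L z = 0 → (z + y ∈ S ↔ y ∈ S) := by
    intro y z hz
    rw [hmemS, hmemS, map_add, hz, zero_add]
  set f : L → ℂ := fun x => ∑ y ∈ S, χ (Algebra.trace K L (x * (a + b * y))) with hf
  have hinner : ∀ x, (∑ᶠ y ∈ S₀, psiL p L (x * (a + b * y))) = f x := by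
    intro x
    simp only [hf]
    rw [← finsum_mem_coe_finset]
    simp only [hψ]
    simp [hSdef]
  have hU : U₁ = ∑ x, if x ∈ D₀ then f x else 0 := by
    rw [hU₁, ← Finset.sum_filter, ← finsum_mem_coe_finset]
    simp [hinner]
  have hf0 : ∀ x, (¬ ∃ k : K, algebraMap K L k = x * b) → f x = 0 := by
    intro x hx
    rw [← sum_S_eq_zero χ hχ (x * b) (x * a) hx S hSinv]
    simp only [hf, mul_add, mul_assoc]
  -- the three cases
  have hcardS : (S.card : ℂ) = q * T₀.ncard := by
    have h1 := Finset.card_eq_sum_card_fiberwise (s := S)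
      (t := T₀.toFinset) (f := fun y => Algebra.trace K L y) (by
        intro y hy
        have := (hmemS y).mp hy
        simpa using this)
    have h2 : ∀ k ∈ T₀.toFinset, (S.filter fun y => Algebra.trace K L y = k).card = q := by
      intro k hk
      rw [← card_trace_fiber (L := L) q (by omega) hK hL k]
      congr 1
      ext y
      simp only [Finset.mem_filter, Finset.mem_univ, true_and, hmemS, and_iff_right_iff_imp]
      rintro rfl
      simpa using hk
    rw [Finset.sum_congr rfl h2, Finset.sum_const, smul_eq_mul] at h1
    rw [h1, Set.ncard_eq_toFinset_card']
    push_cast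
    ring
  have hD0case : b⁻¹ ∈ D₀ →
      U₁ = -(q : ℂ) * T₀.ncard + if -a * b⁻¹ ∈ S₀ then (q : ℂ) ^ 2 else 0 := by
    intro hbD
    obtain ⟨n, hn, hnK⟩ := (hmemD _).mp hbD
    have hcD : ∀ c : K, c ≠ 0 → algebraMap K L c * b⁻¹ ∈ D₀ := by
      intro c hc
      obtain ⟨n', hn'⟩ := hω (algebraMap K L c * b⁻¹)
        (mul_ne_zero (by simpa using hc) (inv_ne_zero hb))
      rw [hmemD]
      refine ⟨n', hn', ?_⟩
      rw [hn] at hn'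
      have := exp_mod q (2 * m) hq2 hdvd hK hL ω hω c hc n n' hn'
      rwa [← show n % (2 * m) = n' % (2 * m) from this]
    have hU2 : U₁ = ∑ c : K, (f (algebraMap K L c * b⁻¹) - if c = 0 then f 0 else 0) := by
      rw [hU]
      symm
      apply Finset.sum_of_injOn (fun c : K => algebraMap K L c * b⁻¹)
      · intro c _ c' _ h
        exact (algebraMap K L).injective (mul_right_cancel₀ (inv_ne_zero hb) h)
      · intro c _
        simp
      · intro x _ hx
        rw [hf0 x, ite_self]
        rintro ⟨k, hk⟩
        exact hx ⟨k, by simp, by simp [hk, hb]⟩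
      · intro c _
        by_cases hc : c = 0
        · simp [hc, h0D]
        · simp [hc, hcD c hc]
    have hfc : ∀ c : K, f (algebraMap K L c * b⁻¹) =
        ∑ y ∈ S, χ (c * Algebra.trace K L (y - (-a * b⁻¹))) := by
      intro c
      rw [hf]
      apply Finset.sum_congr rfl
      intro y _
      rw [← smul_eq_mul c, ← map_smul, Algebra.smul_def]
      congr 2
      field_simp
      ring
    have hf00 : f 0 = q * T₀.ncard := by
      rw [← hcardS]
      simp [hf]
    rw [hU2, Finset.sum_sub_distrib, Finset.sum_ite_eq' Finset.univ (0 : K), hf00]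
    simp only [hfc, Finset.mem_univ, if_true]
    rw [Finset.sum_comm]
    simp only [AddChar.sum_mulShift _ hχ, hK, map_sub, sub_eq_zero]
    have : (∑ y ∈ S, (((if Algebra.trace K L y = Algebra.trace K L (-a * b⁻¹) then q else 0 : ℕ)) : ℂ))
        = if -a * b⁻¹ ∈ S₀ then (q : ℂ) ^ 2 else 0 := by
      rw [← Nat.cast_sum, ← Finset.sum_filter, Finset.sum_const, smul_eq_mul]
      have hmS : -a * b⁻¹ ∈ S₀ ↔ Algebra.trace K L (-a * b⁻¹) ∈ T₀ := by
        rw [hS₀, Set.mem_ofPred_eq]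
      split_ifs with hin
      · have : (S.filter fun y => Algebra.trace K L y = Algebra.trace K L (-a * b⁻¹)).card = q := by
          rw [← card_trace_fiber (L := L) q (by omega) hK hL (Algebra.trace K L (-a * b⁻¹))]
          congr 1
          ext y
          simp only [Finset.mem_filter, Finset.mem_univ, true_and, hmemS, and_iff_right_iff_imp]
          intro h
          rw [h]
          exact hmS.mp hin
        rw [this]
        push_cast
        ring
      · have : (S.filter fun y => Algebra.trace K L y = Algebra.trace K L (-a * b⁻¹)) = ∅ := by
          rw [Finset.filter_eq_empty_iff]
          intro y hy h
          apply hin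
          rw [hmS, ← h]
          exact (hmemS y).mp hy
        rw [this]
        simp
    rw [this]
    ring
  refine ⟨?_, ?_, ?_⟩
  · rintro ⟨h1, h2⟩
    rw [hD0case h2, if_pos h1]
  · rintro ⟨h1, h2⟩
    rw [hD0case h2, if_neg h1, add_zero]
  · intro h
    rw [hU]
    apply Finset.sum_eq_zero
    intro x _
    split_ifs with hx
    · apply hf0
      rintro ⟨k, hk⟩
      rw [hD₁] at h
      simp only [Set.mem_iUnion, cyc, Set.mem_ofPred_eq, exists_prop] at h
      obtain ⟨i, hi, j, hj⟩ := h
      obtain ⟨n, hn, hnK⟩ := (hmemD x).mp hx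
      have hk0 : k ≠ 0 := by
        rintro rfl
        rw [map_zero] at hk
        rcases mul_eq_zero.mp hk.symm with h | h
        · exact h0D (h ▸ hx)
        · exact hb h
      have h1 : algebraMap K L k * ω ^ (i + m + 2 * m * j) = ω ^ n := by
        rw [pow_add _ (i + m), pow_mul ω (2 * m) j, ← hj, hk, ← hn, mul_inv_cancel_right₀ hb]
      have h2 : (i + m + 2 * m * j) % (2 * m) = n % (2 * m) :=
        exp_mod q (2 * m) hq2 hdvd hK hL ω hω k hk0 _ _ h1
      rw [Nat.add_mul_mod_self_left] at h2
      exact hKdisj i hi (h2 ▸ hnK)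
    · rfl


end
end

section
/- Let q = p^s be an odd prime power, ω a primitive element of F_{q²}, and m a positive integer with 2m | q+1. Let T_0, T_1 be arbitrary subsets of F_q and set S_0 = {x ∈ F_{q²} : Tr_{q²/q}(x) ∈ T_0}, S_1 = {x ∈ F_{q²} : Tr_{q²/q}(xω^m) ∈ T_1}. For a, b ∈ F_{q²} with b ≠ 0, define U_3 = Σ_{x ∈ F_{q²}^*} Σ_{y ∈ S_0 ∩ S_1} ζ_p^{Tr_{q²/p}(x(a+by))}. Then U_3 = −|T_0||T_1| + q² if −ab^{−1} ∈ S_0 ∩ S_1, and U_3 = −|T_0||T_1| otherwise. -/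
noncomputable section

theorem aux_sum (p : ℕ) (hp : p.Prime) (L : Type) [Field L] [Fintype L] [DecidableEq L] [CharP L p]
    (c : L) : ∑ x : L, psiL p L (x * c) = if c = 0 then (Fintype.card L : ℂ) else 0 := by
  have : Fact p.Prime := ⟨hp⟩
  let _ : Algebra (ZMod p) L := ZMod.algebra L p
  have hz : IsPrimitiveRoot (zetaP p) p := Complex.isPrimitiveRoot_exp p hp.ne_zero
  have : NeZero p := ⟨hp.ne_zero⟩
  let χ : AddChar (ZMod p) ℂ := AddChar.zmodChar p hz.pow_eq_one
  let ψ : AddChar L ℂ := χ.compAddMonoidHom (Algebra.trace (ZMod p) L).toAddMonoidHom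
  have hψ : ∀ x, ψ x = psiL p L x := fun x => by
    simp only [ψ, χ, AddChar.compAddMonoidHom_apply, AddChar.zmodChar_apply, psiL]
    rfl
  have hprim : ψ.IsPrimitive := by
    apply AddChar.IsPrimitive.of_ne_one
    rw [AddChar.ne_one_iff]
    obtain ⟨x, hx⟩ := Algebra.trace_surjective (ZMod p) L 1
    refine ⟨x, ?_⟩
    have : ψ x = χ 1 := by
      rw [← hx]; rfl
    rw [this, AddChar.zmodChar_apply, ZMod.val_one, pow_one]
    exact hz.ne_one hp.one_lt
  have := AddChar.sum_mulShift c hprim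
  simp only [hψ] at this
  rw [this]
  split_ifs <;> simp

theorem aux_theta (p s q m : ℕ) (hp : p.Prime) (hpodd : p ≠ 2) (hs : 0 < s) (hq : q = p ^ s)
    (hm : 0 < m) (hdvd : 2 * m ∣ q + 1)
    (L : Type) [Field L] [Fintype L] [CharP L p] (hL : Fintype.card L = q ^ 2)
    (ω : L) (hω : IsPrim L ω) : (ω ^ m) ^ q ≠ ω ^ m := by
  intro h
  have h0 : ω ≠ 0 := by
    rintro rfl
    obtain ⟨n, hn⟩ := hω (-1) (by simp)
    have hc : (-1 : L) ≠ 1 := Ring.neg_one_ne_one_of_char_ne_two (by rwa [ringChar.eq L p])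
    rcases n with _ | n
    · simp at hn; exact hc hn
    · simp at hn
  have hq1 : 1 < q := hq ▸ Nat.one_lt_pow hs.ne' hp.one_lt
  obtain ⟨r, rfl⟩ : ∃ r, q = r + 1 := ⟨q - 1, by omega⟩
  have h1 : ω ^ (m * r) = 1 := by
    rw [pow_succ, ← pow_mul] at h
    exact mul_eq_right₀ (pow_ne_zero m h0) |>.mp h
  have h2 : Fintype.card L - 1 ∣ m * r := by
    rw [← FiniteField.forall_pow_eq_one_iff L]
    intro x
    obtain ⟨n, hn⟩ := hω x x.ne_zero
    ext
    rw [Units.val_pow_eq_pow_val, hn, ← pow_mul, mul_comm n, pow_mul, h1, one_pow, Units.val_one]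
  have h3 := Nat.le_of_dvd (Nat.mul_pos hm (by omega)) h2
  have h4 := Nat.le_of_dvd (by omega) hdvd
  have h5 : (r + 1) ^ 2 - 1 = (r + 2) * r := by
    rw [Nat.sub_eq_iff_eq_add (Nat.one_le_pow _ _ (by omega))]; ring
  rw [hL, h5] at h3
  have := Nat.le_of_mul_le_mul_right h3 (by omega)
  omega

theorem aux_bij (q : ℕ) (hq1 : 1 < q) (K L : Type) [Field K] [Fintype K] [Field L] [Fintype L] [Algebra K L]
    (hK : Fintype.card K = q) (hL : Fintype.card L = q ^ 2) (θ : L) (hθ : θ ^ q ≠ θ) :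
    Function.Bijective (fun y : L => (Algebra.trace K L y, Algebra.trace K L (y * θ))) := by
  have hfr : Module.finrank K L = 2 := by
    have := Module.card_eq_pow_finrank (K := K) (V := L)
    rw [hK, hL] at this
    exact (Nat.pow_right_injective hq1 this).symm
  have htr : ∀ y : L, algebraMap K L (Algebra.trace K L y) = y + y ^ q := fun y => by
    rw [FiniteField.algebraMap_trace_eq_sum_pow, hfr, Nat.card_eq_fintype_card, hK]
    simp [Finset.sum_range_succ]
  rw [Fintype.bijective_iff_injective_and_card]
  refine ⟨?_, by rw [Fintype.card_prod, hK, hL, sq]⟩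
  intro y z hyz
  simp only [Prod.mk.injEq] at hyz
  obtain ⟨h1, h2⟩ := hyz
  rw [← sub_eq_zero, ← map_sub] at h1 h2
  rw [← sub_mul] at h2
  have e1 := htr (y - z)
  have e2 := htr ((y - z) * θ)
  rw [h1, map_zero] at e1
  rw [h2, map_zero, mul_pow] at e2
  have : (y - z) * (θ ^ q - θ) = 0 := by linear_combination e2 - θ ^ q * e1
  rcases mul_eq_zero.mp this with h | h
  · exact sub_eq_zero.mp h
  · exact absurd (sub_eq_zero.mp h) hθ

/-- Lemma 3.7: evaluation of `U₃`. -/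
theorem semiprimitive_U3
    (p s q m : ℕ) (hp : p.Prime) (hpodd : p ≠ 2) (hs : 0 < s) (hq : q = p ^ s)
    (hm : 0 < m) (hdvd : 2 * m ∣ q + 1)
    (K L : Type) [Field K] [Fintype K] [Field L] [Fintype L] [Algebra K L] [CharP L p]
    (hK : Fintype.card K = q) (hL : Fintype.card L = q ^ 2)
    (ω : L) (hω : IsPrim L ω)
    (T₀ T₁ : Set K)
    (S₀ S₁ : Set L)
    (hS₀ : S₀ = {x : L | Algebra.trace K L x ∈ T₀})
    (hS₁ : S₁ = {x : L | Algebra.trace K L (x * ω ^ m) ∈ T₁})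
    (a b : L) (hb : b ≠ 0)
    (U₃ : ℂ)
    (hU₃ : U₃ = ∑ᶠ x ∈ {x : L | x ≠ 0}, ∑ᶠ y ∈ S₀ ∩ S₁, psiL p L (x * (a + b * y)))
    : (-a * b⁻¹ ∈ S₀ ∩ S₁ →
        U₃ = -(T₀.ncard : ℂ) * T₁.ncard + (q : ℂ) ^ 2) ∧
      (-a * b⁻¹ ∉ S₀ ∩ S₁ → U₃ = -(T₀.ncard : ℂ) * T₁.ncard) := by
  classical
  have hq1 : 1 < q := hq ▸ Nat.one_lt_pow hs.ne' hp.one_lt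
  have hbij := aux_bij q hq1 K L hK hL (ω ^ m)
    (aux_theta p s q m hp hpodd hs hq hm hdvd L hL ω hω)
  have hcard : (S₀ ∩ S₁).ncard = T₀.ncard * T₁.ncard := by
    rw [← Set.ncard_prod, ← Set.ncard_preimage_of_injective_subset_range hbij.1
      (by rw [hbij.2.range_eq]; exact Set.subset_univ _), hS₀, hS₁]
    rfl
  have hpsi0 : psiL p L 0 = 1 := by simp [psiL]
  have hinner : ∀ y : L, ∑ x ∈ Finset.univ.filter (fun x : L => x ≠ 0), psiL p L (x * (a + b * y))
      = (if y = -a * b⁻¹ then (q : ℂ) ^ 2 else 0) - 1 := by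
    intro y
    have h := aux_sum p hp L (a + b * y)
    rw [← Finset.sum_filter_add_sum_filter_not _ (fun x : L => x ≠ 0)] at h
    have h' : ∑ x ∈ Finset.univ.filter (fun x : L => ¬ x ≠ 0), psiL p L (x * (a + b * y)) = 1 := by
      rw [Finset.sum_eq_single (0 : L)]
      · rw [zero_mul, hpsi0]
      · intro x hx hx0
        exact absurd hx0 (Finset.mem_filter.mp hx).2
      · intro hx
        exact absurd (Finset.mem_filter.mpr ⟨Finset.mem_univ _, by simp⟩) hx
    have hiff : a + b * y = 0 ↔ y = -a * b⁻¹ := by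
      rw [eq_mul_inv_iff_mul_eq₀ hb]
      constructor <;> intro h <;> linear_combination h
    rw [h', hL] at h
    simp only [hiff] at h
    push_cast at h
    linear_combination h
  have key : U₃ = (if -a * b⁻¹ ∈ S₀ ∩ S₁ then (q : ℂ) ^ 2 else 0) - (T₀.ncard : ℂ) * T₁.ncard := by
    have hA : ∀ f : L → ℂ, ∑ᶠ y ∈ S₀ ∩ S₁, f y = ∑ y ∈ (S₀ ∩ S₁).toFinset, f y := fun f =>
      finsum_mem_eq_toFinset_sum f _
    have hB : ∀ f : L → ℂ, ∑ᶠ x ∈ {x : L | x ≠ 0}, f x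
        = ∑ x ∈ Finset.univ.filter (fun x : L => x ≠ 0), f x := fun f => by
      rw [finsum_mem_eq_toFinset_sum]
      congr 1
      ext; simp
    rw [hU₃, hB]
    simp only [hA]
    rw [Finset.sum_comm, Finset.sum_congr rfl (fun y _ => hinner y), Finset.sum_sub_distrib,
      Finset.sum_ite_eq', Finset.sum_const, ← Set.ncard_eq_toFinset_card', hcard]
    simp only [Set.mem_toFinset]
    simp
  rw [key]
  constructor <;> intro h
  · rw [if_pos h]; ring
  · rw [if_neg h]; ring

end
end
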